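/- Let L > 1 be an integer, let J be a finite-range step distribution invariant under lattice reflections and rotations containing the nearest-neighbour vectors, let γ ∈ (0,1/3), and let |s| be sufficiently small (depending only on J and γ). For every f ∈ C_c^∞(R^2) with ∫ f dx = 0 and every admissible discretisation (f_ε) of f: lim_{ε→0} lim_{N→∞} lim_{m^2↓0} (f_ε, C̃^{Λ_N}(s,m^2) f_ε) = (v_J^2 + s)^{−1} · (f, (−Δ_{R^2})^{−1} f)_{R^2}, where f_ε is identified with a function on Λ_N for N large enough that its support fits in the torus. -/

import Mathlib

open Filter Real MeasureTheory

noncomputable section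

/-- The two-dimensional discrete torus of side length `n`. -/
abbrev Torus (n : ℕ) := ZMod n × ZMod n

/-- Canonical projection `ℤ² → Λ_n`. -/
def torusProj (n : ℕ) (x : ℤ × ℤ) : Torus n := ((x.1 : ZMod n), (x.2 : ZMod n))

/-- A finite-range step distribution: a finite subset of `ℤ²∖{0}` invariant under lattice
reflections and rotations and containing the nearest-neighbour vectors. -/
structure StepDist (J : Finset (ℤ × ℤ)) : Prop where
  not_zero : ((0 : ℤ), (0 : ℤ)) ∉ J
  nn₁ : ((1 : ℤ), (0 : ℤ)) ∈ J
  nn₂ : ((-1 : ℤ), (0 : ℤ)) ∈ J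
  nn₃ : ((0 : ℤ), (1 : ℤ)) ∈ J
  nn₄ : ((0 : ℤ), (-1 : ℤ)) ∈ J
  refl₁ : ∀ x ∈ J, ((-x.1, x.2) : ℤ × ℤ) ∈ J
  refl₂ : ∀ x ∈ J, ((x.1, -x.2) : ℤ × ℤ) ∈ J
  rot : ∀ x ∈ J, ((-x.2, x.1) : ℤ × ℤ) ∈ J

/-- The normalised range-`J` Laplacian on the torus `Λ_n`. -/
def laplacianJ (J : Finset (ℤ × ℤ)) (n : ℕ) (f : Torus n → ℝ) (x : Torus n) : ℝ :=
  (J.card : ℝ)⁻¹ * ∑ y ∈ J, (f (x + torusProj n y) - f x)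

/-- Configuration space of the Discrete Gaussian model: `2πℤ`-valued fields pinned at `0`. -/
def DGConfigs (n : ℕ) : Set (Torus n → ℝ) :=
  {σ | (∀ x, ∃ k : ℤ, σ x = 2 * Real.pi * k) ∧ σ 0 = 0}

/-- The energy `(1/(2β)) (σ, −Δ_J σ)`. -/
def dgEnergy (J : Finset (ℤ × ℤ)) (n : ℕ) (β : ℝ) (σ : Torus n → ℝ) : ℝ :=
  (1 / (2 * β)) * ∑' x : Torus n, σ x * -(laplacianJ J n σ x)

/-- Expectation of the Discrete Gaussian model on `Λ_n` at temperature `β`. -/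
def dgExpect (J : Finset (ℤ × ℤ)) (n : ℕ) (β : ℝ) (F : (Torus n → ℝ) → ℝ) : ℝ :=
  (∑' σ : DGConfigs n, Real.exp (-(dgEnergy J n β σ.1)) * F σ.1) /
    (∑' σ : DGConfigs n, Real.exp (-(dgEnergy J n β σ.1)))

/-- Pairing `(g, σ)` of a (finitely supported) `g : ℤ² → ℝ`, identified with a function on the
torus via the canonical projection, with a field `σ` on the torus. -/
def torusPairing (n : ℕ) (g : ℤ × ℤ → ℝ) (σ : Torus n → ℝ) : ℝ :=
  ∑' x : ℤ × ℤ, g x * σ (torusProj n x)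

/-- `v_J² = (2|J|)⁻¹ Σ_{x∈J} x₁²`. -/
def vJsq (J : Finset (ℤ × ℤ)) : ℝ :=
  (2 * (J.card : ℝ))⁻¹ * ∑ x ∈ J, ((x.1 : ℝ)) ^ 2

/-- Continuum Fourier transform `f̂(p) = ∫ f(x) e^{−i p·x} dx` on `ℝ²`. -/
def contFT (f : ℝ × ℝ → ℝ) (p : ℝ × ℝ) : ℂ :=
  ∫ x : ℝ × ℝ, (f x : ℂ) * Complex.exp (-Complex.I * ((p.1 * x.1 + p.2 * x.2 : ℝ) : ℂ))

/-- `(f, (−Δ_{ℝ²})⁻¹ f) = (2π)⁻² ∫ |p|⁻² |f̂(p)|² dp`. -/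
def gffPairing (f : ℝ × ℝ → ℝ) : ℝ :=
  ((2 * Real.pi) ^ 2)⁻¹ * ∫ p : ℝ × ℝ, Complex.normSq (contFT f p) / (p.1 ^ 2 + p.2 ^ 2)

/-- The four nearest-neighbour directions in `ℤ²`. -/
def dirsZ : Finset (ℤ × ℤ) := {((1 : ℤ), (0 : ℤ)), (-1, 0), (0, 1), (0, -1)}

/-- `(f_ε)` is an admissible discretisation of `f` with constant `C_f`. -/
structure IsAdmissible (f : ℝ × ℝ → ℝ) (fε : ℝ → (ℤ × ℤ) → ℝ) (Cf : ℝ) : Prop where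
  finite_supp : ∀ ε ∈ Set.Ioo (0 : ℝ) 1, (Function.support (fε ε)).Finite
  sum_zero : ∀ ε ∈ Set.Ioo (0 : ℝ) 1, ∑' x : ℤ × ℤ, fε ε x = 0
  grad0 : ∀ ε ∈ Set.Ioo (0 : ℝ) 1, ∀ x : ℤ × ℤ, |fε ε x| ≤ Cf * ε ^ 2
  grad1 : ∀ ε ∈ Set.Ioo (0 : ℝ) 1, ∀ x : ℤ × ℤ, ∀ μ ∈ dirsZ,
    |ε⁻¹ * (fε ε (x + μ) - fε ε x)| ≤ Cf * ε ^ 2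
  grad2 : ∀ ε ∈ Set.Ioo (0 : ℝ) 1, ∀ x : ℤ × ℤ, ∀ μ ∈ dirsZ, ∀ ν ∈ dirsZ,
    |ε⁻¹ ^ 2 * (fε ε (x + μ + ν) - fε ε (x + ν) - fε ε (x + μ) + fε ε x)| ≤ Cf * ε ^ 2
  supp : ∀ ε ∈ Set.Ioo (0 : ℝ) 1, ∀ x : ℤ × ℤ, fε ε x ≠ 0 →
    |(x.1 : ℝ)| ≤ Cf * ε⁻¹ ∧ |(x.2 : ℝ)| ≤ Cf * ε⁻¹
  approx : ∀ δ > (0 : ℝ), ∃ ε₀ > (0 : ℝ), ∀ ε ∈ Set.Ioo (0 : ℝ) 1, ε < ε₀ →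
    ∀ x : ℤ × ℤ, |ε⁻¹ ^ 2 * fε ε x - f (ε * x.1, ε * x.2)| ≤ δ

/-- The unnormalised nearest-neighbour Laplacian on the torus `Λ_n`. -/
def lapNN (n : ℕ) (f : Torus n → ℝ) (x : Torus n) : ℝ :=
  ∑ μ ∈ dirsZ, (f (x + torusProj n μ) - f x)

/-- Identification of a finitely supported `g : ℤ² → ℝ` with a function on the torus. -/
def toTorus (n : ℕ) (g : ℤ × ℤ → ℝ) (y : Torus n) : ℝ :=
  ∑' x : ℤ × ℤ, if torusProj n x = y then g x else 0

/-- `IsCtildeVal J n γ s m2 g val` says that `val = (g, C̃^{Λ_n}(s,m²) g)`, where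
`C̃(s,m²) = γ(1+sγΔ) + (1+sγΔ) C(s,m²) (1+sγΔ)`, `C(s,m²) = (C(m²)⁻¹ − sΔ)⁻¹` and
`C(m²) = (−Δ_J + m²)⁻¹ − γ·id`.  The operator inverses are encoded by their defining
equations: writing `h = (1+sγΔ)g`, `u = C(s,m²)h` and `w = h + sΔu`, the field `u` is
characterised by `(−Δ_J + m²)(u + γw) = w`, and then
`(g, C̃ g) = γ(g,h) + (g, (1+sγΔ)u)`. -/
def IsCtildeVal (J : Finset (ℤ × ℤ)) (n : ℕ) (γ s m2 : ℝ) (g : Torus n → ℝ) (val : ℝ) :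
    Prop :=
  ∃ u : Torus n → ℝ,
    (∀ x : Torus n,
      -(laplacianJ J n
          (fun y => u y + γ * (g y + s * γ * lapNN n g y + s * lapNN n u y)) x)
        + m2 * (u x + γ * (g x + s * γ * lapNN n g x + s * lapNN n u x))
        = g x + s * γ * lapNN n g x + s * lapNN n u x) ∧
    val = γ * (∑' x : Torus n, g x * (g x + s * γ * lapNN n g x))
        + ∑' x : Torus n, g x * (u x + s * γ * lapNN n u x)

/-!
On the torus all operators are Fourier multipliers. Writing `λ_J`, `λ` for the symbols of `-Δ_J`,
`-Δ` and `Q = 1 - sγλ`, the symbol of `C̃(s, m²)` collapses to `Q / ((λ_J + m²)Q + sλ)`, and for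
small `s` this is continuous away from the origin, `O(|p|⁻²)` uniformly in the Brillouin zone and
asymptotic to `(v_J² + s)⁻¹ |p|⁻²` at the origin when `m² = 0`. Since `f_ε` has zero sum, the zero
mode drops out, so the limit `m² ↓ 0` is a termwise limit of a finite sum. The resulting sum over
the dual torus is a Riemann sum of a bounded, almost everywhere continuous function on `(-π, π]²`,
which gives the limit `N → ∞`. Finally substitute `p = εk`: the transform of `f_ε` converges to
`f̂`, and the zero sum (for small `k`) and summation by parts (for large `k`) bound `|k|⁻²` times
its square by a constant times `(1 + k₁²)⁻¹ (1 + k₂²)⁻¹`, so dominated convergence applies.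
-/

section Plane

/-- The inclusion `ℤ² → ℝ²`. -/
def toPlane (x : ℤ × ℤ) : ℝ × ℝ := (x.1, x.2)

/-- The Euclidean inner product on `ℝ × ℝ`, whose norm in Mathlib is the supremum norm. -/
def planeDot (p q : ℝ × ℝ) : ℝ := p.1 * q.1 + p.2 * q.2

@[simp]
lemma norm_toPlane (x : ℤ × ℤ) : ‖toPlane x‖ = ‖x‖ := rfl

lemma toPlane_add (x y : ℤ × ℤ) : toPlane (x + y) = toPlane x + toPlane y := by
  simp [toPlane]

lemma toPlane_neg (x : ℤ × ℤ) : toPlane (-x) = -toPlane x := by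
  simp [toPlane]

lemma planeDot_add (p q r : ℝ × ℝ) : planeDot p (q + r) = planeDot p q + planeDot p r := by
  simp only [planeDot, Prod.fst_add, Prod.snd_add]
  ring

lemma planeDot_neg (p q : ℝ × ℝ) : planeDot p (-q) = -planeDot p q := by
  simp only [planeDot, Prod.fst_neg, Prod.snd_neg]
  ring

lemma planeDot_smul (c : ℝ) (p q : ℝ × ℝ) : planeDot p (c • q) = c * planeDot p q := by
  simp only [planeDot, Prod.smul_fst, Prod.smul_snd, smul_eq_mul]
  ring

lemma smul_planeDot (c : ℝ) (p q : ℝ × ℝ) : planeDot (c • p) q = c * planeDot p q := by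
  simp only [planeDot, Prod.smul_fst, Prod.smul_snd, smul_eq_mul]
  ring

lemma abs_planeDot_le (p q : ℝ × ℝ) : |planeDot p q| ≤ (|p.1| + |p.2|) * ‖q‖ :=
  calc |planeDot p q| ≤ |p.1| * |q.1| + |p.2| * |q.2| := by
        simpa only [planeDot, abs_mul] using abs_add_le (p.1 * q.1) (p.2 * q.2)
    _ ≤ |p.1| * ‖q‖ + |p.2| * ‖q‖ := by
        gcongr
        exacts [norm_fst_le q, norm_snd_le q]
    _ = (|p.1| + |p.2|) * ‖q‖ := by ring

@[fun_prop]
lemma continuous_planeDot_left (q : ℝ × ℝ) : Continuous fun p => planeDot p q := by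
  unfold planeDot
  fun_prop

lemma sq_add_sq_pos {p : ℝ × ℝ} (hp : p ≠ 0) : 0 < p.1 ^ 2 + p.2 ^ 2 := by
  rcases not_and_or.mp (mt Prod.ext_iff.mpr hp) with h | h
  · exact add_pos_of_pos_of_nonneg (sq_pos_of_ne_zero h) (sq_nonneg _)
  · exact add_pos_of_nonneg_of_pos (sq_nonneg _) (sq_pos_of_ne_zero h)

end Plane

section RiemannSum

/-- The lattice point `x` whose cell `R⁻¹ (x + [0,1)²)` contains `t`. -/
def gridFloor (R : ℝ) (t : ℝ × ℝ) : ℤ × ℤ := (⌊R * t.1⌋, ⌊R * t.2⌋)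

lemma measurable_gridFloor (R : ℝ) : Measurable (gridFloor R) := by
  unfold gridFloor
  fun_prop

lemma abs_inv_mul_floor_sub_le {R : ℝ} (hR : 0 < R) (u : ℝ) : |R⁻¹ * ⌊R * u⌋ - u| ≤ R⁻¹ := by
  have hfract : R⁻¹ * ⌊R * u⌋ - u = -(R⁻¹ * Int.fract (R * u)) := by
    rw [Int.fract]
    field_simp
    ring
  rw [hfract, abs_neg, abs_of_nonneg (mul_nonneg (inv_nonneg.2 hR.le) (Int.fract_nonneg _))]
  exact mul_le_of_le_one_right (inv_nonneg.2 hR.le) (Int.fract_lt_one _).le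

lemma norm_inv_smul_gridFloor_sub_le {R : ℝ} (hR : 0 < R) (t : ℝ × ℝ) :
    ‖R⁻¹ • toPlane (gridFloor R t) - t‖ ≤ R⁻¹ :=
  max_le (abs_inv_mul_floor_sub_le hR t.1) (abs_inv_mul_floor_sub_le hR t.2)

lemma tendsto_inv_smul_gridFloor {ι : Type*} {l : Filter ι} {R : ι → ℝ} (hR : Tendsto R l atTop)
    (t : ℝ × ℝ) : Tendsto (fun a => (R a)⁻¹ • toPlane (gridFloor (R a) t)) l (nhds t) := by
  refine tendsto_iff_norm_sub_tendsto_zero.2 (squeeze_zero' (.of_forall fun _ => norm_nonneg _) ?_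
    (tendsto_inv_atTop_zero.comp hR))
  filter_upwards [hR.eventually_gt_atTop 0] with a ha using norm_inv_smul_gridFloor_sub_le ha t

lemma norm_gridFloor_ge {R : ℝ} (hR : 0 < R) (t : ℝ × ℝ) : R * ‖t‖ - 1 ≤ ‖gridFloor R t‖ := by
  have hscale : ‖R⁻¹ • toPlane (gridFloor R t)‖ = R⁻¹ * ‖gridFloor R t‖ := by
    rw [norm_smul, norm_toPlane, Real.norm_of_nonneg (inv_nonneg.2 hR.le)]
  have hle : ‖t‖ ≤ R⁻¹ * ‖gridFloor R t‖ + R⁻¹ := by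
    have := norm_sub_norm_le t (R⁻¹ • toPlane (gridFloor R t))
    rw [norm_sub_rev] at this
    linarith [norm_inv_smul_gridFloor_sub_le hR t]
  have := mul_le_mul_of_nonneg_left hle hR.le
  rw [mul_add, mul_inv_cancel_left₀ hR.ne', mul_inv_cancel₀ hR.ne'] at this
  linarith

lemma gridFloor_preimage_singleton {R : ℝ} (hR : 0 < R) (x : ℤ × ℤ) :
    gridFloor R ⁻¹' {x} =
      Set.Ico ((x.1 : ℝ) / R) ((x.1 + 1) / R) ×ˢ Set.Ico ((x.2 : ℝ) / R) ((x.2 + 1) / R) := by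
  ext t
  simp only [gridFloor, Set.mem_preimage, Set.mem_singleton_iff, Prod.ext_iff, Int.floor_eq_iff,
    Set.mem_prod, Set.mem_Ico, div_le_iff₀ hR, lt_div_iff₀ hR, mul_comm R]

lemma map_gridFloor_volume {R : ℝ} (hR : 0 < R) :
    (volume : Measure (ℝ × ℝ)).map (gridFloor R) = ENNReal.ofReal (R ^ 2)⁻¹ • Measure.count := by
  refine Measure.ext_of_singleton fun x => ?_
  have hside : ∀ a : ℝ, (a + 1) / R - a / R = R⁻¹ := fun a => by ring
  rw [Measure.map_apply (measurable_gridFloor R) (measurableSet_singleton x),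
    gridFloor_preimage_singleton hR, Measure.volume_eq_prod, Measure.prod_prod, Real.volume_Ico,
    Real.volume_Ico, hside, hside, ← ENNReal.ofReal_mul (inv_nonneg.2 hR.le), Measure.smul_apply,
    Measure.count_singleton, smul_eq_mul, mul_one, sq, mul_inv]

variable {E : Type*} [NormedAddCommGroup E] [NormedSpace ℝ E] [CompleteSpace E]

lemma integral_comp_gridFloor {R : ℝ} (hR : 0 < R) {H : ℤ × ℤ → E}
    (hH : Summable fun x => ‖H x‖) :
    ∫ t, H (gridFloor R t) = (R ^ 2)⁻¹ • ∑' x, H x := by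
  rw [← integral_map (measurable_gridFloor R).aemeasurable
      StronglyMeasurable.of_discrete.aestronglyMeasurable,
    map_gridFloor_volume hR, integral_smul_measure, integral_countable (integrable_count_iff.2 hH),
    ENNReal.toReal_ofReal (by positivity)]
  simp [Measure.real]

lemma finite_setOf_norm_le (r : ℝ) : {x : ℤ × ℤ | ‖x‖ ≤ r}.Finite := by
  simpa [Metric.closedBall, dist_zero_right] using
    (isCompact_closedBall (0 : ℤ × ℤ) r).finite_of_discrete

theorem tendsto_gridSum {ι : Type*} {l : Filter ι} [l.IsCountablyGenerated] {R : ι → ℝ}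
    (hR : Tendsto R l atTop) {H : ι → ℤ × ℤ → E} {F : ℝ × ℝ → E} {M c : ℝ}
    (hM : ∀ᶠ a in l, ∀ x, ‖H a x‖ ≤ M) (hsupp : ∀ᶠ a in l, ∀ x, H a x ≠ 0 → ‖x‖ ≤ c * R a)
    (hlim : ∀ᵐ t, Tendsto (fun a => H a (gridFloor (R a) t)) l (nhds (F t))) :
    Tendsto (fun a => (R a ^ 2)⁻¹ • ∑' x, H a x) l (nhds (∫ t, F t)) := by
  let bound : ℝ × ℝ → ℝ := (Metric.closedBall 0 (c + 1)).indicator fun _ => M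
  have hbound : Integrable bound :=
    (integrableOn_const measure_closedBall_lt_top.ne).integrable_indicator
      measurableSet_closedBall
  refine (tendsto_integral_filter_of_dominated_convergence bound ?_ ?_ hbound hlim).congr' ?_
  · exact .of_forall fun a => (StronglyMeasurable.of_discrete.comp_measurable
      (measurable_gridFloor (R a))).aestronglyMeasurable
  · filter_upwards [hM, hsupp, hR.eventually_ge_atTop 1] with a haM hasupp haR
    refine .of_forall fun t => ?_
    by_cases ht : t ∈ Metric.closedBall (0 : ℝ × ℝ) (c + 1)
    · simpa only [bound, Set.indicator_of_mem ht] using haM _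
    · have hzero : H a (gridFloor (R a) t) = 0 := by
        by_contra hne
        rw [mem_closedBall_zero_iff, not_le] at ht
        nlinarith [hasupp _ hne, norm_gridFloor_ge (zero_lt_one.trans_le haR) t]
      simp only [bound, Set.indicator_of_notMem ht, hzero, norm_zero, le_refl]
  · filter_upwards [hsupp, hR.eventually_gt_atTop 0] with a hasupp haR
    refine integral_comp_gridFloor haR (summable_of_hasFiniteSupport ?_)
    exact (finite_setOf_norm_le (c * R a)).subset fun x hx => hasupp x (norm_ne_zero_iff.1 hx)

theorem tendsto_riemannSum {ι : Type*} {l : Filter ι} [l.IsCountablyGenerated] {R : ι → ℝ}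
    (hR : Tendsto R l atTop) {F : ℝ × ℝ → E} {M c : ℝ} (hM : ∀ t, ‖F t‖ ≤ M)
    (hsupp : ∀ t, F t ≠ 0 → ‖t‖ ≤ c) (hcont : ∀ᵐ t, ContinuousAt F t) :
    Tendsto (fun a => (R a ^ 2)⁻¹ • ∑' x, F ((R a)⁻¹ • toPlane x)) l (nhds (∫ t, F t)) := by
  refine tendsto_gridSum hR (M := M) (c := c) (.of_forall fun a x => hM _) ?_ ?_
  · filter_upwards [hR.eventually_gt_atTop 0] with a ha x hx
    have := hsupp _ hx
    rwa [norm_smul, norm_toPlane, norm_inv, Real.norm_of_nonneg ha.le, inv_mul_le_iff₀ ha,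
      mul_comm] at this
  · filter_upwards [hcont] with t ht using
      ht.tendsto.comp (tendsto_inv_smul_gridFloor hR t)

end RiemannSum

section LatticeFourier

/-- The Fourier transform `ĝ(p) = Σ_{x ∈ ℤ²} g(x) e^{-i p·x}` of a function on the lattice, with
the same sign convention as `contFT`. -/
def latticeFourier (g : ℤ × ℤ → ℝ) (p : ℝ × ℝ) : ℂ :=
  ∑' x : ℤ × ℤ, (g x : ℂ) * Complex.exp (-Complex.I * (planeDot p (toPlane x) : ℂ))

lemma norm_exp_neg_I_mul (θ : ℝ) : ‖Complex.exp (-Complex.I * (θ : ℂ))‖ = 1 := by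
  rw [neg_mul, ← mul_neg, ← Complex.ofReal_neg, Complex.norm_exp_I_mul_ofReal]

lemma abs_le_mul_norm_exp_sub_one {θ : ℝ} (hθ : |θ| ≤ π) :
    |θ| ≤ π / 2 * ‖Complex.exp (Complex.I * (θ : ℂ)) - 1‖ := by
  have habs : |θ / 2| = |θ| / 2 := by rw [abs_div, abs_two]
  have hsin : 2 / π * |θ / 2| ≤ |sin (θ / 2)| := Real.mul_abs_le_abs_sin (by linarith)
  rw [Complex.norm_exp_I_mul_ofReal_sub_one, norm_mul, Real.norm_two, Real.norm_eq_abs]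
  calc |θ| = π * (2 / π * |θ / 2|) := by rw [habs]; field_simp
    _ ≤ π * |sin (θ / 2)| := by gcongr
    _ = π / 2 * (2 * |sin (θ / 2)|) := by ring

variable {g : ℤ × ℤ → ℝ}

lemma norm_latticeFourier_term (g : ℤ × ℤ → ℝ) (p : ℝ × ℝ) (x : ℤ × ℤ) :
    ‖(g x : ℂ) * Complex.exp (-Complex.I * (planeDot p (toPlane x) : ℂ))‖ = |g x| := by
  rw [norm_mul, norm_exp_neg_I_mul, mul_one, Complex.norm_real, Real.norm_eq_abs]

lemma summable_latticeFourier_term (hg : Summable fun x => |g x|) (p : ℝ × ℝ) :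
    Summable fun x => (g x : ℂ) * Complex.exp (-Complex.I * (planeDot p (toPlane x) : ℂ)) :=
  .of_norm (by simpa only [norm_latticeFourier_term] using hg)

lemma continuous_latticeFourier (hg : Summable fun x => |g x|) : Continuous (latticeFourier g) :=
  continuous_tsum (fun x => by fun_prop) hg fun x p => (norm_latticeFourier_term g p x).le

lemma norm_latticeFourier_le (hg : Summable fun x => |g x|) (p : ℝ × ℝ) :
    ‖latticeFourier g p‖ ≤ ∑' x, |g x| :=
  tsum_of_norm_bounded hg.hasSum fun x => (norm_latticeFourier_term g p x).le

lemma norm_latticeFourier_le_of_tsum_eq_zero (hg : Summable fun x => |g x|)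
    (hg' : Summable fun x => |g x| * ‖x‖) (hzero : ∑' x, g x = 0) (p : ℝ × ℝ) :
    ‖latticeFourier g p‖ ≤ (∑' x, |g x| * ‖x‖) * (|p.1| + |p.2|) := by
  have hsub : latticeFourier g p =
      ∑' x, (g x : ℂ) * (Complex.exp (-Complex.I * (planeDot p (toPlane x) : ℂ)) - 1) := by
    have hzero' : ∑' x, (g x : ℂ) = 0 := by rw [← Complex.ofReal_tsum, hzero, Complex.ofReal_zero]
    simp only [mul_sub, mul_one]
    rw [(summable_latticeFourier_term hg p).tsum_sub
      (Complex.hasSum_ofReal.2 hg.of_abs.hasSum).summable, hzero', sub_zero, latticeFourier]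
  rw [hsub]
  refine tsum_of_norm_bounded (hg'.hasSum.mul_right _) fun x => ?_
  have hexp : ‖Complex.exp (-Complex.I * (planeDot p (toPlane x) : ℂ)) - 1‖ ≤
      (|p.1| + |p.2|) * ‖x‖ := by
    have := Real.norm_exp_I_mul_ofReal_sub_one_le (x := planeDot p (toPlane (-x)))
    rw [toPlane_neg, planeDot_neg, norm_neg, Complex.ofReal_neg, mul_neg, ← neg_mul] at this
    exact this.trans (abs_planeDot_le p (toPlane x))
  calc ‖(g x : ℂ) * (Complex.exp (-Complex.I * (planeDot p (toPlane x) : ℂ)) - 1)‖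
      ≤ |g x| * ((|p.1| + |p.2|) * ‖x‖) := by
        rw [norm_mul, Complex.norm_real, Real.norm_eq_abs]
        gcongr
    _ = |g x| * ‖x‖ * (|p.1| + |p.2|) := by ring

lemma latticeFourier_shift (g : ℤ × ℤ → ℝ) (μ : ℤ × ℤ) (p : ℝ × ℝ) :
    latticeFourier (fun x => g (x + μ)) p =
      Complex.exp (Complex.I * (planeDot p (toPlane μ) : ℂ)) * latticeFourier g p := by
  rw [latticeFourier, latticeFourier, ← tsum_mul_left, ← (Equiv.addRight μ).tsum_eq (fun x =>
    Complex.exp (Complex.I * (planeDot p (toPlane μ) : ℂ)) * ((g x : ℂ) * _))]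
  refine tsum_congr fun x => ?_
  rw [Equiv.coe_addRight, toPlane_add, planeDot_add, mul_left_comm, ← Complex.exp_add]
  push_cast
  ring_nf

-- A discrete integration by parts: smoothness of `g` gives decay of `ĝ`.
lemma abs_planeDot_mul_norm_latticeFourier_le (hg : Summable fun x => |g x|) {p : ℝ × ℝ}
    {μ : ℤ × ℤ} (hp : |planeDot p (toPlane μ)| ≤ π) :
    |planeDot p (toPlane μ)| * ‖latticeFourier g p‖ ≤ π / 2 * ∑' x, |g (x + μ) - g x| := by
  have hshift : Summable fun x => |g (x + μ)| := (Equiv.addRight μ).summable_iff.2 hg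
  have hgrad : latticeFourier (fun x => g (x + μ) - g x) p =
      (Complex.exp (Complex.I * (planeDot p (toPlane μ) : ℂ)) - 1) * latticeFourier g p := by
    rw [sub_mul, one_mul, ← latticeFourier_shift]
    simp only [latticeFourier, Complex.ofReal_sub, sub_mul]
    exact (summable_latticeFourier_term hshift p).tsum_sub (summable_latticeFourier_term hg p)
  calc |planeDot p (toPlane μ)| * ‖latticeFourier g p‖
      ≤ π / 2 * ‖Complex.exp (Complex.I * (planeDot p (toPlane μ) : ℂ)) - 1‖ *
          ‖latticeFourier g p‖ := by
        gcongr
        exact abs_le_mul_norm_exp_sub_one hp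
    _ = π / 2 * ‖latticeFourier (fun x => g (x + μ) - g x) p‖ := by
        rw [hgrad, norm_mul, mul_assoc]
    _ ≤ π / 2 * ∑' x, |g (x + μ) - g x| := by
        gcongr
        exact norm_latticeFourier_le (hshift.of_abs.sub hg.of_abs).abs p

lemma tsum_le_of_norm_le_of_ne_zero {h : ℤ × ℤ → ℝ} {r c : ℝ} (hr : 0 ≤ r) (hc : 0 ≤ c)
    (hle : ∀ x, h x ≤ c) (hsupp : ∀ x, h x ≠ 0 → ‖x‖ ≤ r) : ∑' x, h x ≤ (2 * r + 1) ^ 2 * c := by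
  have hfloor : 0 ≤ ⌊r⌋ := Int.floor_nonneg.2 hr
  let box : Finset (ℤ × ℤ) := Finset.Icc (-⌊r⌋) ⌊r⌋ ×ˢ Finset.Icc (-⌊r⌋) ⌊r⌋
  have hbox : ∀ x ∉ box, h x = 0 := fun x hx => by
    by_contra hne
    have hcoord : ∀ a : ℤ, ‖a‖ ≤ ‖x‖ → a ∈ Finset.Icc (-⌊r⌋) ⌊r⌋ := fun a ha => by
      rw [Finset.mem_Icc, ← abs_le, Int.le_floor, Int.cast_abs, ← Int.norm_eq_abs]
      exact ha.trans (hsupp x hne)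
    exact hx (Finset.mem_product.2 ⟨hcoord _ (norm_fst_le x), hcoord _ (norm_snd_le x)⟩)
  have hcard : (box.card : ℝ) = (2 * ⌊r⌋ + 1) ^ 2 := by
    have : ((⌊r⌋ + 1 - -⌊r⌋).toNat : ℝ) = 2 * ⌊r⌋ + 1 := by
      rw [← Int.cast_natCast, Int.toNat_of_nonneg (by lia)]
      push_cast
      ring
    rw [Finset.card_product, Int.card_Icc, Nat.cast_mul, this, sq]
  calc ∑' x, h x = ∑ x ∈ box, h x := tsum_eq_sum hbox
    _ ≤ box.card * c := by simpa using Finset.sum_le_card_nsmul box h c fun x _ => hle x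
    _ ≤ (2 * r + 1) ^ 2 * c := by
        rw [hcard]
        gcongr
        exact Int.floor_le r

end LatticeFourier

section StepSymbol

/-- The Fourier symbol of `f ↦ -Σ_{y ∈ S} (f(· + y) - f)` for a symmetric set of steps `S`. -/
def stepSymbol (S : Finset (ℤ × ℤ)) (p : ℝ × ℝ) : ℝ :=
  ∑ y ∈ S, (1 - cos (planeDot p (toPlane y)))

lemma continuous_stepSymbol (S : Finset (ℤ × ℤ)) : Continuous (stepSymbol S) := by
  unfold stepSymbol
  fun_prop

lemma stepSymbol_nonneg (S : Finset (ℤ × ℤ)) (p : ℝ × ℝ) : 0 ≤ stepSymbol S p :=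
  Finset.sum_nonneg fun _ _ => sub_nonneg.2 (cos_le_one _)

lemma stepSymbol_mono {S T : Finset (ℤ × ℤ)} (h : S ⊆ T) (p : ℝ × ℝ) :
    stepSymbol S p ≤ stepSymbol T p :=
  Finset.sum_le_sum_of_subset_of_nonneg h fun _ _ _ => sub_nonneg.2 (cos_le_one _)

lemma sum_exp_sub_one_eq_neg_stepSymbol {S : Finset (ℤ × ℤ)} (hS : ∀ y ∈ S, -y ∈ S)
    (p : ℝ × ℝ) :
    ∑ y ∈ S, (Complex.exp (Complex.I * (planeDot p (toPlane y) : ℂ)) - 1) =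
      -(stepSymbol S p : ℂ) := by
  have hreflect : ∑ y ∈ S, (Complex.exp (-(Complex.I * (planeDot p (toPlane y) : ℂ))) - 1) =
      ∑ y ∈ S, (Complex.exp (Complex.I * (planeDot p (toPlane y) : ℂ)) - 1) := by
    refine Finset.sum_nbij' (fun y => -y) (fun y => -y) hS hS (by simp) (by simp) fun y _ => ?_
    rw [toPlane_neg, planeDot_neg, Complex.ofReal_neg, mul_neg]
  have hcos : ∑ y ∈ S, (Complex.exp (Complex.I * (planeDot p (toPlane y) : ℂ)) - 1) +
      ∑ y ∈ S, (Complex.exp (-(Complex.I * (planeDot p (toPlane y) : ℂ))) - 1) =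
      -2 * (stepSymbol S p : ℂ) := by
    rw [← Finset.sum_add_distrib, stepSymbol, Complex.ofReal_sum, Finset.mul_sum]
    refine Finset.sum_congr rfl fun y _ => ?_
    push_cast
    rw [Complex.cos, mul_comm Complex.I, ← neg_mul]
    ring
  linear_combination (hcos - hreflect) / 2

end StepSymbol

section TorusFourier

variable (n : ℕ) [NeZero n]

/-- The dual lattice point `2πk/n`, with representatives chosen in `(-π, π]²`. -/
def torusMomentum (k : Torus n) : ℝ × ℝ :=
  (2 * π * k.1.valMinAbs / n, 2 * π * k.2.valMinAbs / n)

/-- The character `x ↦ e^{-2πi k·x/n}` of the torus. -/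
def torusChar (k : Torus n) : AddChar (Torus n) ℂ where
  toFun x := ZMod.stdAddChar (-(k.1 * x.1 + k.2 * x.2))
  map_zero_eq_one' := by simp
  map_add_eq_mul' x y := by
    rw [← AddChar.map_add_eq_mul, Prod.fst_add, Prod.snd_add]
    ring_nf

/-- The `k`-th Fourier coefficient `Σ_x f(x) e^{-2πi k·x/n}` of a real function on the torus, as
a real linear functional. -/
def torusFourier (k : Torus n) : (Torus n → ℝ) →ₗ[ℝ] ℂ :=
  Fintype.linearCombination ℝ (torusChar n k)

lemma torusFourier_apply (k : Torus n) (f : Torus n → ℝ) :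
    torusFourier n k f = ∑ x, (f x : ℂ) * torusChar n k x := by
  simp only [torusFourier, Fintype.linearCombination_apply, Complex.real_smul]

lemma torusChar_torusProj (k : Torus n) (x : ℤ × ℤ) :
    torusChar n k (torusProj n x) =
      Complex.exp (-Complex.I * (planeDot (torusMomentum n k) (toPlane x) : ℂ)) := by
  have hcast : -(k.1 * (torusProj n x).1 + k.2 * (torusProj n x).2) =
      ((-(k.1.valMinAbs * x.1 + k.2.valMinAbs * x.2) : ℤ) : ZMod n) := by
    push_cast
    simp [torusProj]
  change ZMod.stdAddChar (-(k.1 * (torusProj n x).1 + k.2 * (torusProj n x).2)) = _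
  rw [hcast, ZMod.stdAddChar_coe]
  simp only [planeDot, torusMomentum, toPlane]
  push_cast
  ring_nf

lemma sum_conj_torusChar_mul_torusChar (x y : Torus n) :
    ∑ k : Torus n, (starRingEnd ℂ) (torusChar n k x) * torusChar n k y =
      if x = y then (n : ℂ) ^ 2 else 0 := by
  have hfactor : ∀ k : Torus n, (starRingEnd ℂ) (torusChar n k x) * torusChar n k y =
      ZMod.stdAddChar (k.1 * (x.1 - y.1)) * ZMod.stdAddChar (k.2 * (x.2 - y.2)) := fun k => by
    rw [← AddChar.map_neg_eq_conj, ← AddChar.map_add_eq_mul, ← AddChar.map_add_eq_mul]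
    refine congrArg ZMod.stdAddChar ?_
    simp only [Prod.fst_add, Prod.snd_add, Prod.fst_neg, Prod.snd_neg]
    ring
  simp_rw [hfactor, Fintype.sum_prod_type, ← Finset.mul_sum, ← Finset.sum_mul,
    AddChar.sum_mulShift _ (ZMod.isPrimitive_stdAddChar n), ZMod.card, sub_eq_zero]
  by_cases h₁ : x.1 = y.1 <;> by_cases h₂ : x.2 = y.2 <;> simp [Prod.ext_iff, h₁, h₂, sq]

lemma sum_mul_eq_sum_conj_torusFourier_mul (a b : Torus n → ℝ) :
    ((∑ x, a x * b x : ℝ) : ℂ) =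
      ((n : ℂ) ^ 2)⁻¹ * ∑ k, (starRingEnd ℂ) (torusFourier n k a) * torusFourier n k b := by
  have hn : (n : ℂ) ≠ 0 := Nat.cast_ne_zero.mpr (NeZero.ne n)
  have hexpand : ∑ k, (starRingEnd ℂ) (torusFourier n k a) * torusFourier n k b =
      ∑ x, ∑ y, (a x : ℂ) * b y *
        ∑ k, (starRingEnd ℂ) (torusChar n k x) * torusChar n k y := by
    simp only [torusFourier_apply, map_sum, map_mul, Complex.conj_ofReal]
    simp_rw [Finset.sum_mul_sum, Finset.mul_sum]
    rw [Finset.sum_comm]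
    refine Finset.sum_congr rfl fun x _ => ?_
    rw [Finset.sum_comm]
    exact Finset.sum_congr rfl fun y _ => Finset.sum_congr rfl fun k _ => by ring
  rw [hexpand]
  simp only [sum_conj_torusChar_mul_torusChar, mul_ite, mul_zero, Finset.sum_ite_eq,
    Finset.mem_univ, if_true, ← Finset.sum_mul]
  push_cast
  field_simp

lemma torusFourier_shift (k : Torus n) (f : Torus n → ℝ) (y : ℤ × ℤ) :
    torusFourier n k (fun x => f (x + torusProj n y)) =
      Complex.exp (Complex.I * (planeDot (torusMomentum n k) (toPlane y) : ℂ)) *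
        torusFourier n k f := by
  have hinv : Complex.exp (Complex.I * (planeDot (torusMomentum n k) (toPlane y) : ℂ)) *
      torusChar n k (torusProj n y) = 1 := by
    rw [torusChar_torusProj, ← Complex.exp_add, neg_mul, add_neg_cancel, Complex.exp_zero]
  rw [torusFourier_apply, torusFourier_apply, Finset.mul_sum,
    ← Equiv.sum_comp (Equiv.addRight (torusProj n y)) (fun x =>
      Complex.exp (Complex.I * (planeDot (torusMomentum n k) (toPlane y) : ℂ)) * ((f x : ℂ) * _))]
  refine Finset.sum_congr rfl fun x _ => ?_
  rw [Equiv.coe_addRight, AddChar.map_add_eq_mul]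
  linear_combination (-(f (x + torusProj n y) : ℂ) * torusChar n k x) * hinv

lemma torusFourier_sum_sub {S : Finset (ℤ × ℤ)} (hS : ∀ y ∈ S, -y ∈ S) (k : Torus n)
    (f : Torus n → ℝ) :
    torusFourier n k (fun x => ∑ y ∈ S, (f (x + torusProj n y) - f x)) =
      -(stepSymbol S (torusMomentum n k) : ℂ) * torusFourier n k f := by
  have hsum : (fun x => ∑ y ∈ S, (f (x + torusProj n y) - f x)) =
      ∑ y ∈ S, ((fun x => f (x + torusProj n y)) - f) := by
    ext x
    simp only [Finset.sum_apply, Pi.sub_apply]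
  rw [hsum, map_sum, ← sum_exp_sub_one_eq_neg_stepSymbol hS, Finset.sum_mul]
  refine Finset.sum_congr rfl fun y _ => ?_
  rw [map_sub, torusFourier_shift, sub_mul, one_mul]

lemma torusFourier_toTorus (k : Torus n) {g : ℤ × ℤ → ℝ} (hg : (Function.support g).Finite) :
    torusFourier n k (toTorus n g) = latticeFourier g (torusMomentum n k) := by
  have hzero : ∀ x ∉ hg.toFinset, g x = 0 := fun x hx => by simpa using hx
  have htorus : ∀ y, toTorus n g y =
      ∑ x ∈ hg.toFinset, if torusProj n x = y then g x else 0 := fun y =>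
    tsum_eq_sum fun x hx => by rw [hzero x hx, ite_self]
  have hlattice : latticeFourier g (torusMomentum n k) =
      ∑ x ∈ hg.toFinset, (g x : ℂ) * torusChar n k (torusProj n x) := by
    simp_rw [torusChar_torusProj]
    exact tsum_eq_sum fun x hx => by rw [hzero x hx, Complex.ofReal_zero, zero_mul]
  rw [torusFourier_apply, hlattice]
  simp_rw [htorus, Complex.ofReal_sum, Finset.sum_mul]
  rw [Finset.sum_comm]
  refine Finset.sum_congr rfl fun x _ => ?_
  rw [Finset.sum_eq_single (torusProj n x) (fun y _ hy => by simp [hy.symm]) (by simp), if_pos rfl]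

end TorusFourier

section BrillouinZone

/-- The Brillouin zone `(-π, π]²`, a fundamental domain of the dual of `ℤ²`. -/
def brillouinZone : Set (ℝ × ℝ) := Set.Ioc (-π) π ×ˢ Set.Ioc (-π) π

lemma measurableSet_brillouinZone : MeasurableSet brillouinZone :=
  measurableSet_Ioc.prod measurableSet_Ioc

lemma volume_frontier_brillouinZone : volume (frontier brillouinZone) = 0 :=
  ((convex_Ioc (-π) π).prod (convex_Ioc (-π) π)).addHaar_frontier volume

lemma abs_fst_le_of_mem_brillouinZone {p : ℝ × ℝ} (hp : p ∈ brillouinZone) : |p.1| ≤ π :=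
  abs_le.2 ⟨hp.1.1.le, hp.1.2⟩

lemma abs_snd_le_of_mem_brillouinZone {p : ℝ × ℝ} (hp : p ∈ brillouinZone) : |p.2| ≤ π :=
  abs_le.2 ⟨hp.2.1.le, hp.2.2⟩

lemma norm_le_of_mem_brillouinZone {p : ℝ × ℝ} (hp : p ∈ brillouinZone) : ‖p‖ ≤ π :=
  max_le (abs_fst_le_of_mem_brillouinZone hp) (abs_snd_le_of_mem_brillouinZone hp)

lemma brillouinZone_mem_nhds_zero : brillouinZone ∈ nhds 0 :=
  prod_mem_nhds (Ioc_mem_nhds (neg_lt_zero.2 pi_pos) pi_pos)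
    (Ioc_mem_nhds (neg_lt_zero.2 pi_pos) pi_pos)

lemma two_pi_mul_div_mem_Ioc_iff {n : ℕ} [NeZero n] (z : ℤ) :
    2 * π * z / n ∈ Set.Ioc (-π) π ↔ z * 2 ∈ Set.Ioc (-n : ℤ) n := by
  have hn : (0 : ℝ) < n := Nat.cast_pos.2 (NeZero.pos n)
  have hcomm : 2 * π * z = π * ((z * 2 : ℤ) : ℝ) := by push_cast; ring
  have hneg : -π * n = π * ((-n : ℤ) : ℝ) := by push_cast; ring
  have hle : (((z * 2 : ℤ) : ℝ) ≤ n) ↔ z * 2 ≤ n := by exact_mod_cast Iff.rfl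
  rw [Set.mem_Ioc, Set.mem_Ioc, lt_div_iff₀ hn, div_le_iff₀ hn, hcomm, hneg,
    mul_lt_mul_iff_right₀ pi_pos, mul_le_mul_iff_right₀ pi_pos, Int.cast_lt, hle]

lemma torusMomentum_mem_brillouinZone (n : ℕ) [NeZero n] (k : Torus n) :
    torusMomentum n k ∈ brillouinZone :=
  ⟨(two_pi_mul_div_mem_Ioc_iff _).2 k.1.valMinAbs_mem_Ioc,
    (two_pi_mul_div_mem_Ioc_iff _).2 k.2.valMinAbs_mem_Ioc⟩

variable {E : Type*} [NormedAddCommGroup E]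

lemma sum_torusMomentum_eq_tsum (n : ℕ) [NeZero n] (G : ℝ × ℝ → E) :
    ∑ k, G (torusMomentum n k) =
      ∑' x, brillouinZone.indicator G ((n / (2 * π) : ℝ)⁻¹ • toPlane x) := by
  let rep : Torus n → ℤ × ℤ := fun k => (k.1.valMinAbs, k.2.valMinAbs)
  have hrep : Function.Injective rep := fun k k' h =>
    Prod.ext (ZMod.injective_valMinAbs (Prod.ext_iff.1 h).1)
      (ZMod.injective_valMinAbs (Prod.ext_iff.1 h).2)
  have hscale : ∀ x : ℤ × ℤ,
      (n / (2 * π) : ℝ)⁻¹ • toPlane x = (2 * π * x.1 / n, 2 * π * x.2 / n) := fun x => by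
    rw [inv_div]
    exact Prod.ext (div_mul_eq_mul_div _ _ _) (div_mul_eq_mul_div _ _ _)
  have hsupp : Function.support
      (fun x => brillouinZone.indicator G ((n / (2 * π) : ℝ)⁻¹ • toPlane x)) ⊆ Set.range rep := by
    intro x hx
    have hmem := Set.mem_of_indicator_ne_zero hx
    rw [hscale] at hmem
    exact ⟨torusProj n x, Prod.ext
      ((ZMod.valMinAbs_spec _ _).2 ⟨rfl, (two_pi_mul_div_mem_Ioc_iff _).1 hmem.1⟩)
      ((ZMod.valMinAbs_spec _ _).2 ⟨rfl, (two_pi_mul_div_mem_Ioc_iff _).1 hmem.2⟩)⟩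
  rw [← hrep.tsum_eq hsupp, tsum_fintype]
  refine Finset.sum_congr rfl fun k _ => ?_
  rw [hscale]
  exact (Set.indicator_of_mem (torusMomentum_mem_brillouinZone n k) G).symm

lemma continuousAt_indicator_of_notMem_frontier {X : Type*} [TopologicalSpace X] {s : Set X}
    {G : X → E} {x : X} (hx : x ∉ frontier s) (hG : x ∈ s → ContinuousAt G x) :
    ContinuousAt (s.indicator G) x := by
  by_cases hmem : x ∈ closure s
  · have hint : x ∈ interior s := not_not.1 fun h => hx ⟨hmem, h⟩
    exact (hG (interior_subset hint)).congr (by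
      filter_upwards [mem_interior_iff_mem_nhds.1 hint] with y hy
        using (Set.indicator_of_mem hy G).symm)
  · refine (continuousAt_const (y := (0 : E))).congr ?_
    filter_upwards [isClosed_closure.isOpen_compl.mem_nhds hmem] with y hy
      using (Set.indicator_of_notMem (fun h => hy (subset_closure h)) G).symm

theorem tendsto_sum_torusMomentum [NormedSpace ℝ E] [CompleteSpace E] {ι : Type*} {l : Filter ι}
    [l.IsCountablyGenerated] {side : ι → ℕ} [∀ a, NeZero (side a)] (hside : Tendsto side l atTop)
    {G : ℝ × ℝ → E} {M : ℝ} (hM : ∀ p ∈ brillouinZone, ‖G p‖ ≤ M)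
    (hcont : ∀ᵐ p, p ∈ brillouinZone → ContinuousAt G p) :
    Tendsto (fun a => ((side a : ℝ) ^ 2)⁻¹ • ∑ k, G (torusMomentum (side a) k)) l
      (nhds (((2 * π) ^ 2)⁻¹ • ∫ p in brillouinZone, G p)) := by
  have hR : Tendsto (fun a => (side a : ℝ) / (2 * π)) l atTop :=
    (tendsto_natCast_atTop_atTop.comp hside).atTop_div_const two_pi_pos
  have hM' : ∀ p, ‖brillouinZone.indicator G p‖ ≤ M := fun p => by
    have hzero : (0 : ℝ × ℝ) ∈ brillouinZone := mem_of_mem_nhds brillouinZone_mem_nhds_zero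
    rw [norm_indicator_eq_indicator_norm]
    exact Set.indicator_le' hM (fun _ _ => (norm_nonneg _).trans (hM 0 hzero)) p
  have hcont' : ∀ᵐ p, ContinuousAt (brillouinZone.indicator G) p := by
    filter_upwards [hcont, measure_eq_zero_iff_ae_notMem.1 volume_frontier_brillouinZone]
      with p hp hfr using continuousAt_indicator_of_notMem_frontier hfr hp
  have hsum := (tendsto_riemannSum hR hM' (fun p hp =>
    norm_le_of_mem_brillouinZone (Set.mem_of_indicator_ne_zero hp)) hcont').const_smul
      ((2 * π) ^ 2)⁻¹
  rw [integral_indicator measurableSet_brillouinZone] at hsum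
  refine hsum.congr fun a => ?_
  rw [sum_torusMomentum_eq_tsum, smul_smul, ← mul_inv, ← mul_pow,
    mul_div_cancel₀ _ two_pi_pos.ne']

end BrillouinZone

section GreenSymbol

/-- `m` behaves on the Brillouin zone like the symbol of the Green function of a two-dimensional
random walk: away from the origin it is nonnegative, continuous and at most `K / |p|²`, and
`m(p) ∼ a / |p|²` as `p → 0` along rays. -/
structure IsGreenSymbol (m : ℝ × ℝ → ℝ) (K a : ℝ) : Prop where
  measurable : Measurable m
  nonneg : ∀ p, 0 ≤ m p
  le : ∀ p ∈ brillouinZone, p ≠ 0 → m p ≤ K / (p.1 ^ 2 + p.2 ^ 2)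
  continuousAt : ∀ p ∈ brillouinZone, p ≠ 0 → ContinuousAt m p
  tendsto : ∀ k : ℝ × ℝ, k ≠ 0 → Tendsto (fun ε : ℝ => ε ^ 2 * m (ε • k))
    (nhdsWithin 0 (Set.Ioi 0)) (nhds (a / (k.1 ^ 2 + k.2 ^ 2)))

/-- The quadratic form `(g, m(-i∇) g)` of the Fourier multiplier `m` on the torus, by Parseval. -/
def torusForm (n : ℕ) [NeZero n] (m : ℝ × ℝ → ℝ) (g : ℤ × ℤ → ℝ) : ℝ :=
  ((n : ℝ) ^ 2)⁻¹ * ∑ k, Complex.normSq (latticeFourier g (torusMomentum n k)) *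
    m (torusMomentum n k)

/-- The quadratic form `(g, m(-i∇) g)` of the Fourier multiplier `m` on `ℤ²`, by Parseval. -/
def latticeForm (m : ℝ × ℝ → ℝ) (g : ℤ × ℤ → ℝ) : ℝ :=
  ((2 * π) ^ 2)⁻¹ * ∫ p in brillouinZone, Complex.normSq (latticeFourier g p) * m p

lemma latticeFourier_zero {g : ℤ × ℤ → ℝ} (hzero : ∑' x, g x = 0) : latticeFourier g 0 = 0 := by
  simp [latticeFourier, planeDot, ← Complex.ofReal_tsum, hzero]

lemma normSq_latticeFourier_mul_le {m : ℝ × ℝ → ℝ} {K a : ℝ} (hm : IsGreenSymbol m K a)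
    {g : ℤ × ℤ → ℝ} {B : ℝ} {p : ℝ × ℝ} (hp : p ∈ brillouinZone) (hp0 : p ≠ 0)
    (hB : ‖latticeFourier g p‖ ≤ B * (|p.1| + |p.2|)) :
    Complex.normSq (latticeFourier g p) * m p ≤ 2 * B ^ 2 * K := by
  have hpos : 0 < p.1 ^ 2 + p.2 ^ 2 := sq_add_sq_pos hp0
  have hsq : (|p.1| + |p.2|) ^ 2 ≤ 2 * (p.1 ^ 2 + p.2 ^ 2) := by
    nlinarith [sq_abs p.1, sq_abs p.2, sq_nonneg (|p.1| - |p.2|)]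
  calc Complex.normSq (latticeFourier g p) * m p
      ≤ B ^ 2 * (2 * (p.1 ^ 2 + p.2 ^ 2)) * (K / (p.1 ^ 2 + p.2 ^ 2)) := by
        rw [Complex.normSq_eq_norm_sq]
        refine mul_le_mul ?_ (hm.le p hp hp0) (hm.nonneg p) (by positivity)
        calc ‖latticeFourier g p‖ ^ 2 ≤ (B * (|p.1| + |p.2|)) ^ 2 := by gcongr
          _ ≤ B ^ 2 * (2 * (p.1 ^ 2 + p.2 ^ 2)) := by rw [mul_pow]; gcongr
    _ = 2 * B ^ 2 * K := by field_simp

theorem tendsto_torusForm {m : ℝ × ℝ → ℝ} {K a : ℝ} (hm : IsGreenSymbol m K a)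
    {g : ℤ × ℤ → ℝ} (hg : (Function.support g).Finite) (hzero : ∑' x, g x = 0)
    {ι : Type*} {l : Filter ι} [l.IsCountablyGenerated] {side : ι → ℕ} [∀ a, NeZero (side a)]
    (hside : Tendsto side l atTop) :
    Tendsto (fun a => torusForm (side a) m g) l (nhds (latticeForm m g)) := by
  have hsum : Summable fun x => |g x| :=
    summable_of_hasFiniteSupport (hg.subset fun x hx => abs_ne_zero.1 hx)
  have hsum' : Summable fun x => |g x| * ‖x‖ :=
    summable_of_hasFiniteSupport (hg.subset fun x hx => abs_ne_zero.1 (left_ne_zero_of_mul hx))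
  refine tendsto_sum_torusMomentum hside (M := max 0 (2 * (∑' x, |g x| * ‖x‖) ^ 2 * K)) ?_ ?_
  · intro p hp
    rw [Real.norm_of_nonneg (mul_nonneg (Complex.normSq_nonneg _) (hm.nonneg p))]
    rcases eq_or_ne p 0 with rfl | hp0
    · rw [latticeFourier_zero hzero, map_zero, zero_mul]
      exact le_max_left _ _
    · exact (normSq_latticeFourier_mul_le hm hp hp0
        (norm_latticeFourier_le_of_tsum_eq_zero hsum hsum' hzero p)).trans (le_max_right _ _)
  · filter_upwards [Measure.ae_ne volume 0] with p hp0 hp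
    exact (Complex.continuous_normSq.comp (continuous_latticeFourier hsum)).continuousAt.mul
      (hm.continuousAt p hp hp0)

end GreenSymbol

section Admissible

variable {f : ℝ × ℝ → ℝ} {fε : ℝ → ℤ × ℤ → ℝ} {Cf : ℝ}

namespace IsAdmissible

lemma const_nonneg (hA : IsAdmissible f fε Cf) : 0 ≤ Cf := by
  have hhalf : (1 / 2 : ℝ) ∈ Set.Ioo (0 : ℝ) 1 := by norm_num
  exact nonneg_of_mul_nonneg_left ((abs_nonneg _).trans (hA.grad0 _ hhalf 0)) (by norm_num)

lemma norm_le_of_ne_zero (hA : IsAdmissible f fε Cf) {ε : ℝ} (hε : ε ∈ Set.Ioo (0 : ℝ) 1)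
    {x : ℤ × ℤ} (hx : fε ε x ≠ 0) : ‖x‖ ≤ Cf * ε⁻¹ :=
  max_le (hA.supp ε hε x hx).1 (hA.supp ε hε x hx).2

lemma summable_abs (hA : IsAdmissible f fε Cf) {ε : ℝ} (hε : ε ∈ Set.Ioo (0 : ℝ) 1) :
    Summable fun x => |fε ε x| :=
  summable_of_hasFiniteSupport ((hA.finite_supp ε hε).subset fun _ hx => abs_ne_zero.1 hx)

lemma summable_abs_mul_norm (hA : IsAdmissible f fε Cf) {ε : ℝ} (hε : ε ∈ Set.Ioo (0 : ℝ) 1) :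
    Summable fun x => |fε ε x| * ‖x‖ :=
  summable_of_hasFiniteSupport ((hA.finite_supp ε hε).subset
    fun _ hx => abs_ne_zero.1 (left_ne_zero_of_mul hx))

end IsAdmissible

lemma tsum_le_of_norm_le_mul_inv_add_one {h : ℤ × ℤ → ℝ} {C c ε : ℝ} (hC : 0 ≤ C) (hc : 0 ≤ c)
    (hε : ε ∈ Set.Ioo (0 : ℝ) 1) (hle : ∀ x, h x ≤ c)
    (hsupp : ∀ x, h x ≠ 0 → ‖x‖ ≤ C * ε⁻¹ + 1) :
    ∑' x, h x ≤ (2 * C + 3) ^ 2 * (ε⁻¹ ^ 2 * c) := by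
  have hinv : 1 ≤ ε⁻¹ := (one_le_inv₀ hε.1).2 hε.2.le
  calc ∑' x, h x ≤ (2 * (C * ε⁻¹ + 1) + 1) ^ 2 * c :=
        tsum_le_of_norm_le_of_ne_zero (by positivity) hc hle hsupp
    _ ≤ ((2 * C + 3) * ε⁻¹) ^ 2 * c := by
        gcongr
        linarith
    _ = (2 * C + 3) ^ 2 * (ε⁻¹ ^ 2 * c) := by ring

namespace IsAdmissible

lemma norm_latticeFourier_smul_le (hA : IsAdmissible f fε Cf) {ε : ℝ}
    (hε : ε ∈ Set.Ioo (0 : ℝ) 1) (k : ℝ × ℝ) :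
    ‖latticeFourier (fε ε) (ε • k)‖ ≤ (2 * Cf + 3) ^ 2 * Cf ^ 2 * (|k.1| + |k.2|) := by
  have hε0 : 0 < ε := hε.1
  have hCf : 0 ≤ Cf := hA.const_nonneg
  have hmoment : ∑' x, |fε ε x| * ‖x‖ ≤
      (2 * Cf + 3) ^ 2 * (ε⁻¹ ^ 2 * (Cf * ε ^ 2 * (Cf * ε⁻¹))) := by
    refine tsum_le_of_norm_le_mul_inv_add_one hCf (by positivity) hε (fun x => ?_) fun x hx => ?_
    · rcases eq_or_ne (fε ε x) 0 with hx | hx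
      · rw [hx, abs_zero, zero_mul]
        positivity
      · exact mul_le_mul (hA.grad0 ε hε x) (hA.norm_le_of_ne_zero hε hx) (norm_nonneg x)
          (by positivity)
    · exact (hA.norm_le_of_ne_zero hε (abs_ne_zero.1 (left_ne_zero_of_mul hx))).trans
        (le_add_of_nonneg_right zero_le_one)
  calc ‖latticeFourier (fε ε) (ε • k)‖
      ≤ (∑' x, |fε ε x| * ‖x‖) * (|ε * k.1| + |ε * k.2|) :=
        norm_latticeFourier_le_of_tsum_eq_zero (hA.summable_abs hε) (hA.summable_abs_mul_norm hε)
          (hA.sum_zero ε hε) (ε • k)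
    _ ≤ (2 * Cf + 3) ^ 2 * (ε⁻¹ ^ 2 * (Cf * ε ^ 2 * (Cf * ε⁻¹))) *
          (|ε * k.1| + |ε * k.2|) := by gcongr
    _ = (2 * Cf + 3) ^ 2 * Cf ^ 2 * (|k.1| + |k.2|) := by
        rw [abs_mul, abs_mul, abs_of_pos hε0]
        field_simp

lemma abs_planeDot_mul_norm_latticeFourier_smul_le (hA : IsAdmissible f fε Cf) {ε : ℝ}
    (hε : ε ∈ Set.Ioo (0 : ℝ) 1) {μ : ℤ × ℤ} (hμ : μ ∈ dirsZ) (hμ1 : ‖μ‖ = 1) {k : ℝ × ℝ}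
    (hk : |planeDot (ε • k) (toPlane μ)| ≤ π) :
    |planeDot k (toPlane μ)| * ‖latticeFourier (fε ε) (ε • k)‖ ≤
      π / 2 * ((2 * Cf + 3) ^ 2 * Cf) := by
  have hε0 : 0 < ε := hε.1
  have hCf : 0 ≤ Cf := hA.const_nonneg
  have hgrad : ∑' x, |fε ε (x + μ) - fε ε x| ≤
      (2 * Cf + 3) ^ 2 * (ε⁻¹ ^ 2 * (Cf * ε ^ 3)) := by
    refine tsum_le_of_norm_le_mul_inv_add_one hCf (by positivity) hε (fun x => ?_) fun x hx => ?_
    · have := hA.grad1 ε hε x μ hμ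
      rw [abs_mul, abs_inv, abs_of_pos hε0, inv_mul_le_iff₀ hε0] at this
      linarith
    · rcases eq_or_ne (fε ε x) 0 with h0 | h0
      · have hshift : fε ε (x + μ) ≠ 0 := fun h => hx (by rw [h, h0, sub_zero, abs_zero])
        have := norm_sub_le (x + μ) μ
        rw [add_sub_cancel_right, hμ1] at this
        linarith [hA.norm_le_of_ne_zero hε hshift]
      · linarith [hA.norm_le_of_ne_zero hε h0]
  have hmain := abs_planeDot_mul_norm_latticeFourier_le (hA.summable_abs hε) hk
  rw [smul_planeDot, abs_mul, abs_of_pos hε0, mul_assoc] at hmain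
  refine le_of_mul_le_mul_left ?_ hε0
  calc ε * (|planeDot k (toPlane μ)| * ‖latticeFourier (fε ε) (ε • k)‖)
      ≤ π / 2 * ((2 * Cf + 3) ^ 2 * (ε⁻¹ ^ 2 * (Cf * ε ^ 3))) := hmain.trans (by gcongr)
    _ = ε * (π / 2 * ((2 * Cf + 3) ^ 2 * Cf)) := by field_simp

end IsAdmissible

lemma sq_mul_le_of_small_of_large {X B a b : ℝ} (hX : 0 ≤ X) (hsmall : X ≤ B * (|a| + |b|))
    (ha : |a| * X ≤ B) (hb : |b| * X ≤ B) :
    X ^ 2 * ((1 + a ^ 2) * (1 + b ^ 2)) ≤ 8 * B ^ 2 * (a ^ 2 + b ^ 2) := by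
  have hB : 0 ≤ B := (mul_nonneg (abs_nonneg a) hX).trans ha
  have hquad : X ^ 2 ≤ 2 * B ^ 2 * (a ^ 2 + b ^ 2) := by
    have : (|a| + |b|) ^ 2 ≤ 2 * (a ^ 2 + b ^ 2) := by
      nlinarith [sq_abs a, sq_abs b, sq_nonneg (|a| - |b|)]
    calc X ^ 2 ≤ (B * (|a| + |b|)) ^ 2 := by gcongr
      _ ≤ B ^ 2 * (2 * (a ^ 2 + b ^ 2)) := by rw [mul_pow]; gcongr
      _ = 2 * B ^ 2 * (a ^ 2 + b ^ 2) := by ring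
  have haX : a ^ 2 * X ^ 2 ≤ B ^ 2 := by
    rw [← sq_abs a, ← mul_pow]
    gcongr
  have hbdd : X ≤ 2 * B := by
    rcases le_total (|a| + |b|) 2 with h | h
    · nlinarith
    · nlinarith
  have hbdd_sq : X ^ 2 ≤ 4 * B ^ 2 :=
    calc X ^ 2 ≤ (2 * B) ^ 2 := by gcongr
      _ = 4 * B ^ 2 := by ring
  calc X ^ 2 * ((1 + a ^ 2) * (1 + b ^ 2))
      = X ^ 2 + X ^ 2 * (a ^ 2 + b ^ 2) + a ^ 2 * X ^ 2 * b ^ 2 := by ring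
    _ ≤ 2 * B ^ 2 * (a ^ 2 + b ^ 2) + 4 * B ^ 2 * (a ^ 2 + b ^ 2) + B ^ 2 * b ^ 2 := by gcongr
    _ ≤ 8 * B ^ 2 * (a ^ 2 + b ^ 2) := by nlinarith [sq_nonneg (B * a), sq_nonneg (B * b)]

namespace IsAdmissible

-- The factor `|k|²` compensates the singularity of a Green symbol at the origin.
lemma exists_normSq_latticeFourier_smul_le (hA : IsAdmissible f fε Cf) :
    ∃ D, ∀ ε ∈ Set.Ioo (0 : ℝ) 1, ∀ k : ℝ × ℝ, ε • k ∈ brillouinZone →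
      Complex.normSq (latticeFourier (fε ε) (ε • k)) ≤
        D * (k.1 ^ 2 + k.2 ^ 2) * ((1 + k.1 ^ 2)⁻¹ * (1 + k.2 ^ 2)⁻¹) := by
  have hCf : 0 ≤ Cf := hA.const_nonneg
  let B := (2 * Cf + 3) ^ 2 * Cf ^ 2 + π / 2 * ((2 * Cf + 3) ^ 2 * Cf)
  refine ⟨8 * B ^ 2, fun ε hε k hk => ?_⟩
  have hcoord₁ : ∀ p : ℝ × ℝ, planeDot p (toPlane (1, 0)) = p.1 := by simp [planeDot, toPlane]
  have hcoord₂ : ∀ p : ℝ × ℝ, planeDot p (toPlane (0, 1)) = p.2 := by simp [planeDot, toPlane]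
  have hsmall : ‖latticeFourier (fε ε) (ε • k)‖ ≤ B * (|k.1| + |k.2|) :=
    (hA.norm_latticeFourier_smul_le hε k).trans
      (mul_le_mul_of_nonneg_right (le_add_of_nonneg_right (by positivity)) (by positivity))
  have hlarge : π / 2 * ((2 * Cf + 3) ^ 2 * Cf) ≤ B := le_add_of_nonneg_left (by positivity)
  have h₁ := hA.abs_planeDot_mul_norm_latticeFourier_smul_le hε (μ := (1, 0)) (k := k)
    (by decide) (by simp [Prod.norm_def]) (by
      rw [hcoord₁]; exact abs_fst_le_of_mem_brillouinZone hk)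
  have h₂ := hA.abs_planeDot_mul_norm_latticeFourier_smul_le hε (μ := (0, 1)) (k := k)
    (by decide) (by simp [Prod.norm_def]) (by
      rw [hcoord₂]; exact abs_snd_le_of_mem_brillouinZone hk)
  rw [hcoord₁] at h₁
  rw [hcoord₂] at h₂
  rw [Complex.normSq_eq_norm_sq, ← mul_inv, ← div_eq_mul_inv, le_div_iff₀ (by positivity)]
  exact sq_mul_le_of_small_of_large (norm_nonneg _) hsmall (h₁.trans hlarge) (h₂.trans hlarge)

lemma tendsto_sub_comp (hA : IsAdmissible f fε Cf) (x : ℝ → ℤ × ℤ) :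
    Tendsto (fun ε => ε⁻¹ ^ 2 * fε ε (x ε) - f (ε • toPlane (x ε)))
      (nhdsWithin 0 (Set.Ioi 0)) (nhds 0) := by
  refine Metric.tendsto_nhds.2 fun δ hδ => ?_
  obtain ⟨ε₀, hε₀, happrox⟩ := hA.approx (δ / 2) (half_pos hδ)
  filter_upwards [Ioo_mem_nhdsGT one_pos, Ioo_mem_nhdsGT hε₀] with ε hε hεε₀
  rw [dist_zero_right]
  exact (happrox ε hε hεε₀.2 (x ε)).trans_lt (half_lt_self hδ)

theorem tendsto_latticeFourier (hA : IsAdmissible f fε Cf) (hf : Continuous f) (k : ℝ × ℝ) :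
    Tendsto (fun ε => latticeFourier (fε ε) (ε • k)) (nhdsWithin 0 (Set.Ioi 0))
      (nhds (contFT f k)) := by
  let wave : ℝ × ℝ → ℂ := fun t => Complex.exp (-Complex.I * (planeDot k t : ℂ))
  let H : ℝ → ℤ × ℤ → ℂ := fun ε x => ((ε⁻¹ ^ 2 * fε ε x : ℝ) : ℂ) * wave (ε • toPlane x)
  have hwave : Continuous wave := by unfold wave planeDot; fun_prop
  have hunit : ∀ᶠ ε in nhdsWithin (0 : ℝ) (Set.Ioi 0), ε ∈ Set.Ioo (0 : ℝ) 1 :=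
    Ioo_mem_nhdsGT one_pos
  have hgrid : Tendsto (fun ε => (ε⁻¹ ^ 2)⁻¹ • ∑' x, H ε x) (nhdsWithin 0 (Set.Ioi 0))
      (nhds (∫ t, (f t : ℂ) * wave t)) := by
    refine tendsto_gridSum tendsto_inv_nhdsGT_zero (M := Cf) (c := Cf) ?_ ?_
      (.of_forall fun t => ?_)
    · filter_upwards [hunit] with ε hε x
      rw [norm_mul, norm_exp_neg_I_mul, mul_one, Complex.norm_real, Real.norm_eq_abs, abs_mul,
        abs_of_nonneg (by positivity), inv_pow, inv_mul_le_iff₀ (pow_pos hε.1 2), mul_comm]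
      exact hA.grad0 ε hε x
    · filter_upwards [hunit] with ε hε x hx
      refine hA.norm_le_of_ne_zero hε fun h0 => hx ?_
      simp only [H, h0, mul_zero, Complex.ofReal_zero, zero_mul]
    · have hpoint : Tendsto (fun ε : ℝ => ε • toPlane (gridFloor ε⁻¹ t))
          (nhdsWithin 0 (Set.Ioi 0)) (nhds t) := by
        simpa only [inv_inv] using tendsto_inv_smul_gridFloor tendsto_inv_nhdsGT_zero t
      have hval := (hA.tendsto_sub_comp fun ε => gridFloor ε⁻¹ t).add ((hf.tendsto t).comp hpoint)
      simp only [Function.comp_apply, sub_add_cancel, zero_add] at hval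
      exact ((Complex.continuous_ofReal.tendsto _).comp hval).mul ((hwave.tendsto t).comp hpoint)
  refine hgrid.congr' ?_
  filter_upwards [hunit] with ε hε
  rw [latticeFourier, ← tsum_const_smul'']
  refine tsum_congr fun x => ?_
  have hne : (ε : ℂ) ≠ 0 := Complex.ofReal_ne_zero.2 hε.1.ne'
  simp only [H, wave, planeDot_smul, smul_planeDot, Complex.real_smul]
  push_cast
  field_simp

end IsAdmissible

/-- The density on momentum space whose integral is `(2π)²` times `latticeForm m g`. -/
def spectralDensity (m : ℝ × ℝ → ℝ) (g : ℤ × ℤ → ℝ) : ℝ × ℝ → ℝ :=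
  brillouinZone.indicator fun p => Complex.normSq (latticeFourier g p) * m p

lemma latticeForm_eq_integral_smul (m : ℝ × ℝ → ℝ) (g : ℤ × ℤ → ℝ) {ε : ℝ} (hε : 0 < ε) :
    latticeForm m g = ((2 * π) ^ 2)⁻¹ * ∫ k, ε ^ 2 * spectralDensity m g (ε • k) := by
  have hfinrank : Module.finrank ℝ (ℝ × ℝ) = 2 := by simp
  rw [latticeForm, integral_const_mul, Measure.integral_comp_smul_of_nonneg _ _ _ (hR := hε.le),
    hfinrank, smul_eq_mul, mul_inv_cancel_left₀ (by positivity), spectralDensity,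
    integral_indicator measurableSet_brillouinZone]

variable {m : ℝ × ℝ → ℝ} {K a : ℝ}

lemma IsGreenSymbol.spectralDensity_nonneg (hm : IsGreenSymbol m K a) (g : ℤ × ℤ → ℝ)
    (p : ℝ × ℝ) : 0 ≤ spectralDensity m g p :=
  Set.indicator_nonneg (fun p _ => mul_nonneg (Complex.normSq_nonneg _) (hm.nonneg p)) p

lemma IsGreenSymbol.measurable_spectralDensity (hm : IsGreenSymbol m K a) {g : ℤ × ℤ → ℝ}
    (hg : Summable fun x => |g x|) : Measurable (spectralDensity m g) :=
  ((Complex.continuous_normSq.comp (continuous_latticeFourier hg)).measurable.mul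
    hm.measurable).indicator measurableSet_brillouinZone

namespace IsAdmissible

lemma exists_sq_mul_spectralDensity_smul_le (hA : IsAdmissible f fε Cf)
    (hm : IsGreenSymbol m K a) :
    ∃ D, ∀ ε ∈ Set.Ioo (0 : ℝ) 1, ∀ k : ℝ × ℝ, k ≠ 0 →
      ε ^ 2 * spectralDensity m (fε ε) (ε • k) ≤ D * ((1 + k.1 ^ 2)⁻¹ * (1 + k.2 ^ 2)⁻¹) := by
  obtain ⟨D, hD⟩ := hA.exists_normSq_latticeFourier_smul_le
  refine ⟨max 0 (D * K), fun ε hε k hk => ?_⟩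
  have hε0 : 0 < ε := hε.1
  have hk_pos : 0 < k.1 ^ 2 + k.2 ^ 2 := sq_add_sq_pos hk
  by_cases hzone : ε • k ∈ brillouinZone
  · have hsymbol : m (ε • k) ≤ K / ((ε * k.1) ^ 2 + (ε * k.2) ^ 2) :=
      hm.le _ hzone (smul_ne_zero hε0.ne' hk)
    rw [spectralDensity, Set.indicator_of_mem hzone]
    calc ε ^ 2 * (Complex.normSq (latticeFourier (fε ε) (ε • k)) * m (ε • k))
        ≤ ε ^ 2 * (D * (k.1 ^ 2 + k.2 ^ 2) * ((1 + k.1 ^ 2)⁻¹ * (1 + k.2 ^ 2)⁻¹) *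
            (K / ((ε * k.1) ^ 2 + (ε * k.2) ^ 2))) := by
          refine mul_le_mul_of_nonneg_left ?_ (sq_nonneg ε)
          exact mul_le_mul (hD ε hε k hzone) hsymbol (hm.nonneg _)
            ((Complex.normSq_nonneg _).trans (hD ε hε k hzone))
      _ = D * K * ((1 + k.1 ^ 2)⁻¹ * (1 + k.2 ^ 2)⁻¹) := by
          rw [mul_pow, mul_pow, ← mul_add]
          field_simp
      _ ≤ max 0 (D * K) * ((1 + k.1 ^ 2)⁻¹ * (1 + k.2 ^ 2)⁻¹) := by
          gcongr
          exact le_max_right _ _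
  · rw [spectralDensity, Set.indicator_of_notMem hzone, mul_zero]
    positivity

lemma tendsto_sq_mul_spectralDensity_smul (hA : IsAdmissible f fε Cf) (hf : Continuous f)
    (hm : IsGreenSymbol m K a) {k : ℝ × ℝ} (hk : k ≠ 0) :
    Tendsto (fun ε => ε ^ 2 * spectralDensity m (fε ε) (ε • k)) (nhdsWithin 0 (Set.Ioi 0))
      (nhds (a * (Complex.normSq (contFT f k) / (k.1 ^ 2 + k.2 ^ 2)))) := by
  have hnormSq := (Complex.continuous_normSq.tendsto _).comp (hA.tendsto_latticeFourier hf k)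
  have hzone : ∀ᶠ ε in nhdsWithin (0 : ℝ) (Set.Ioi 0), ε • k ∈ brillouinZone := by
    have hsmul : Tendsto (fun ε : ℝ => ε • k) (nhds 0) (nhds 0) := by
      simpa only [id, zero_smul] using (tendsto_id (x := nhds (0 : ℝ))).smul_const k
    exact (hsmul.mono_left nhdsWithin_le_nhds).eventually brillouinZone_mem_nhds_zero
  rw [mul_div_left_comm]
  refine (hnormSq.mul (hm.tendsto k hk)).congr' ?_
  filter_upwards [hzone] with ε hε
  rw [spectralDensity, Set.indicator_of_mem hε, mul_left_comm]
  rfl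

theorem tendsto_latticeForm (hA : IsAdmissible f fε Cf) (hf : Continuous f)
    (hm : IsGreenSymbol m K a) :
    Tendsto (fun ε => latticeForm m (fε ε)) (nhdsWithin 0 (Set.Ioi 0))
      (nhds (a * gffPairing f)) := by
  obtain ⟨D, hD⟩ := hA.exists_sq_mul_spectralDensity_smul_le hm
  have hunit : ∀ᶠ ε in nhdsWithin (0 : ℝ) (Set.Ioi 0), ε ∈ Set.Ioo (0 : ℝ) 1 :=
    Ioo_mem_nhdsGT one_pos
  have hintegral : Tendsto (fun ε => ∫ k, ε ^ 2 * spectralDensity m (fε ε) (ε • k))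
      (nhdsWithin 0 (Set.Ioi 0))
      (nhds (∫ k : ℝ × ℝ, a * (Complex.normSq (contFT f k) / (k.1 ^ 2 + k.2 ^ 2)))) := by
    refine tendsto_integral_filter_of_dominated_convergence
      (fun k : ℝ × ℝ => D * ((1 + k.1 ^ 2)⁻¹ * (1 + k.2 ^ 2)⁻¹)) ?_ ?_
      ((integrable_inv_one_add_sq.mul_prod integrable_inv_one_add_sq).const_mul D) ?_
    · filter_upwards [hunit] with ε hε
      exact (((hm.measurable_spectralDensity (hA.summable_abs hε)).comp
        (measurable_const_smul ε)).const_mul _).aestronglyMeasurable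
    · filter_upwards [hunit] with ε hε
      filter_upwards [Measure.ae_ne volume 0] with k hk
      rw [Real.norm_of_nonneg (mul_nonneg (sq_nonneg ε) (hm.spectralDensity_nonneg _ _))]
      exact hD ε hε k hk
    · filter_upwards [Measure.ae_ne volume 0] with k hk
      exact hA.tendsto_sq_mul_spectralDensity_smul hf hm hk
  rw [gffPairing, mul_left_comm, ← integral_const_mul]
  refine (hintegral.const_mul _).congr' ?_
  filter_upwards [hunit] with ε hε
  exact (latticeForm_eq_integral_smul m (fε ε) hε.1).symm

end IsAdmissible

end Admissible

section StepDistribution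

namespace StepDist

variable {J : Finset (ℤ × ℤ)}

lemma neg_mem (hJ : StepDist J) {y : ℤ × ℤ} (hy : y ∈ J) : -y ∈ J :=
  hJ.refl₂ _ (hJ.refl₁ y hy)

lemma dirsZ_subset (hJ : StepDist J) : dirsZ ⊆ J := by
  simp [dirsZ, Finset.insert_subset_iff, hJ.nn₁, hJ.nn₂, hJ.nn₃, hJ.nn₄]

lemma sum_fst_sq_eq_sum_snd_sq (hJ : StepDist J) :
    ∑ y ∈ J, (y.1 : ℝ) ^ 2 = ∑ y ∈ J, (y.2 : ℝ) ^ 2 :=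
  Finset.sum_nbij' (fun y => (-y.2, y.1)) (fun y => (y.2, -y.1)) hJ.rot
    (fun y hy => by simpa using hJ.neg_mem (hJ.rot y hy)) (by simp) (by simp) (by simp)

lemma sum_fst_mul_snd_eq_zero (hJ : StepDist J) : ∑ y ∈ J, (y.1 * y.2 : ℝ) = 0 := by
  have hodd : ∑ y ∈ J, (y.1 * y.2 : ℝ) = ∑ y ∈ J, -(y.1 * y.2 : ℝ) :=
    Finset.sum_nbij' (fun y => (-y.1, y.2)) (fun y => (-y.1, y.2)) hJ.refl₁ hJ.refl₁
      (by simp) (by simp) (by simp)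
  rw [Finset.sum_neg_distrib] at hodd
  linarith

lemma sum_planeDot_sq (hJ : StepDist J) (k : ℝ × ℝ) :
    ∑ y ∈ J, planeDot k (toPlane y) ^ 2 = (∑ y ∈ J, (y.1 : ℝ) ^ 2) * (k.1 ^ 2 + k.2 ^ 2) := by
  have hexpand : ∀ y : ℤ × ℤ, planeDot k (toPlane y) ^ 2 =
      k.1 ^ 2 * (y.1 : ℝ) ^ 2 + k.2 ^ 2 * (y.2 : ℝ) ^ 2 + 2 * (k.1 * k.2) * (y.1 * y.2 : ℝ) :=
    fun y => by simp only [planeDot, toPlane]; ring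
  simp_rw [hexpand, Finset.sum_add_distrib, ← Finset.mul_sum, hJ.sum_fst_mul_snd_eq_zero,
    ← hJ.sum_fst_sq_eq_sum_snd_sq]
  ring

end StepDist

lemma stepDist_dirsZ : StepDist dirsZ := by
  constructor <;> decide

lemma card_dirsZ : dirsZ.card = 4 := rfl

lemma sum_dirsZ_fst_sq : ∑ y ∈ dirsZ, (y.1 : ℝ) ^ 2 = 2 := by
  exact_mod_cast (by decide : ∑ y ∈ dirsZ, y.1 ^ 2 = 2)

lemma tendsto_one_sub_cos_mul_div_sq (x : ℝ) :
    Tendsto (fun ε : ℝ => (1 - cos (ε * x)) / ε ^ 2) (nhdsWithin 0 {0}ᶜ) (nhds (x ^ 2 / 2)) := by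
  have hsinc : Continuous fun ε : ℝ => x ^ 2 / 2 * sinc (ε * x / 2) ^ 2 := by
    have := continuous_sinc
    fun_prop
  have hlim := (hsinc.tendsto 0).mono_left (nhdsWithin_le_nhds (s := {0}ᶜ))
  simp only [zero_mul, zero_div, sinc_zero, one_pow, mul_one] at hlim
  refine hlim.congr' ?_
  filter_upwards [self_mem_nhdsWithin] with ε (hε : ε ≠ 0)
  rcases eq_or_ne x 0 with rfl | hx
  · simp
  · have hcos : cos (ε * x) = 1 - 2 * sin (ε * x / 2) ^ 2 := by
      rw [← mul_div_cancel₀ (ε * x) two_ne_zero, Real.cos_two_mul', Real.cos_sq']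
      ring_nf
    rw [sinc_of_ne_zero (div_ne_zero (mul_ne_zero hε hx) two_ne_zero), hcos]
    field_simp
    ring

lemma StepDist.tendsto_stepSymbol_smul_div_sq {J : Finset (ℤ × ℤ)} (hJ : StepDist J)
    (k : ℝ × ℝ) :
    Tendsto (fun ε : ℝ => stepSymbol J (ε • k) / ε ^ 2) (nhdsWithin 0 {0}ᶜ)
      (nhds ((∑ y ∈ J, (y.1 : ℝ) ^ 2) / 2 * (k.1 ^ 2 + k.2 ^ 2))) := by
  rw [div_mul_eq_mul_div, ← hJ.sum_planeDot_sq]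
  simp_rw [stepSymbol, Finset.sum_div, smul_planeDot]
  exact tendsto_finsetSum _ fun y _ => tendsto_one_sub_cos_mul_div_sq _

lemma stepSymbol_le (S : Finset (ℤ × ℤ)) (p : ℝ × ℝ) : stepSymbol S p ≤ 2 * S.card := by
  rw [mul_comm, ← nsmul_eq_mul]
  exact Finset.sum_le_card_nsmul _ _ _ fun y _ => by
    linarith [neg_one_le_cos (planeDot p (toPlane y))]

lemma stepSymbol_dirsZ (p : ℝ × ℝ) :
    stepSymbol dirsZ p = 2 * (1 - cos p.1) + 2 * (1 - cos p.2) := by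
  simp only [stepSymbol, dirsZ, planeDot, toPlane]
  rw [Finset.sum_insert (by decide), Finset.sum_insert (by decide),
    Finset.sum_insert (by decide), Finset.sum_singleton]
  simp
  ring

lemma le_stepSymbol_dirsZ {p : ℝ × ℝ} (hp : p ∈ brillouinZone) :
    4 / π ^ 2 * (p.1 ^ 2 + p.2 ^ 2) ≤ stepSymbol dirsZ p := by
  have h₁ := Real.cos_le_one_sub_mul_cos_sq (abs_fst_le_of_mem_brillouinZone hp)
  have h₂ := Real.cos_le_one_sub_mul_cos_sq (abs_snd_le_of_mem_brillouinZone hp)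
  rw [stepSymbol_dirsZ]
  linarith [show 4 / π ^ 2 * (p.1 ^ 2 + p.2 ^ 2) =
    2 * (2 / π ^ 2 * p.1 ^ 2) + 2 * (2 / π ^ 2 * p.2 ^ 2) by ring]

end StepDistribution

section CtildeSymbol

/-- The Fourier symbol of `-Δ_J`. -/
def walkSymbol (J : Finset (ℤ × ℤ)) (p : ℝ × ℝ) : ℝ := (J.card : ℝ)⁻¹ * stepSymbol J p

/-- The Fourier symbol of `1 + sγΔ`. -/
def smearingSymbol (γ s : ℝ) (p : ℝ × ℝ) : ℝ := 1 - s * γ * stepSymbol dirsZ p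

/-- The Fourier symbol of `(-Δ_J + m²)(1 + sγΔ) - sΔ`. -/
def ctildeDenom (J : Finset (ℤ × ℤ)) (γ s m2 : ℝ) (p : ℝ × ℝ) : ℝ :=
  (walkSymbol J p + m2) * smearingSymbol γ s p + s * stepSymbol dirsZ p

/-- The Fourier symbol of `C̃(s, m²)`, after the cancellation
`γQ + Q² / (((λ_J + m²)⁻¹ - γ)⁻¹ + sλ) = Q / ((λ_J + m²)Q + sλ)` with `Q = 1 - sγλ`, where `λ_J`
and `λ` are the symbols of `-Δ_J` and `-Δ`. -/
def ctildeSymbol (J : Finset (ℤ × ℤ)) (γ s m2 : ℝ) (p : ℝ × ℝ) : ℝ :=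
  smearingSymbol γ s p / ctildeDenom J γ s m2 p

variable {J : Finset (ℤ × ℤ)} {γ s : ℝ}

@[fun_prop]
lemma continuous_smearingSymbol (γ s : ℝ) : Continuous (smearingSymbol γ s) :=
  continuous_const.sub (continuous_const.mul (continuous_stepSymbol _))

@[fun_prop]
lemma continuous_ctildeDenom (J : Finset (ℤ × ℤ)) (γ s m2 : ℝ) :
    Continuous (ctildeDenom J γ s m2) := by
  have := continuous_stepSymbol J
  have := continuous_stepSymbol dirsZ
  unfold ctildeDenom walkSymbol
  fun_prop

lemma ctildeDenom_eq_add_mass_mul (J : Finset (ℤ × ℤ)) (γ s m2 : ℝ) (p : ℝ × ℝ) :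
    ctildeDenom J γ s m2 p = ctildeDenom J γ s 0 p + m2 * smearingSymbol γ s p := by
  simp only [ctildeDenom]
  ring

lemma mul_ctildeDenom_add_eq_one (J : Finset (ℤ × ℤ)) (γ s m2 : ℝ) (p : ℝ × ℝ) :
    γ * ctildeDenom J γ s m2 p + (1 - γ * (walkSymbol J p + m2)) * smearingSymbol γ s p = 1 := by
  simp only [ctildeDenom, smearingSymbol]
  ring

lemma smearingSymbol_mem_Icc (hsγ : |s * γ| ≤ 1 / 16) (p : ℝ × ℝ) :
    smearingSymbol γ s p ∈ Set.Icc (1 / 2) 2 := by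
  have hle : stepSymbol dirsZ p ≤ 8 := by
    refine (stepSymbol_le dirsZ p).trans ?_
    rw [card_dirsZ]
    norm_num
  have hsmall : |s * γ * stepSymbol dirsZ p| ≤ 1 / 2 := by
    rw [abs_mul, abs_of_nonneg (stepSymbol_nonneg dirsZ p)]
    nlinarith [stepSymbol_nonneg dirsZ p]
  rw [abs_le] at hsmall
  constructor <;> simp only [smearingSymbol] <;> linarith

lemma le_ctildeDenom_zero (hJ : dirsZ ⊆ J) (hs : |s| ≤ (4 * (J.card : ℝ))⁻¹)
    (hsγ : |s * γ| ≤ 1 / 16) (p : ℝ × ℝ) :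
    (4 * (J.card : ℝ))⁻¹ * stepSymbol dirsZ p ≤ ctildeDenom J γ s 0 p := by
  have hwalk : (J.card : ℝ)⁻¹ * stepSymbol dirsZ p ≤ walkSymbol J p :=
    mul_le_mul_of_nonneg_left (stepSymbol_mono hJ p) (by positivity)
  have hwalk_nonneg : 0 ≤ (J.card : ℝ)⁻¹ * stepSymbol dirsZ p :=
    mul_nonneg (by positivity) (stepSymbol_nonneg _ _)
  have hdrift : -((4 * (J.card : ℝ))⁻¹ * stepSymbol dirsZ p) ≤ s * stepSymbol dirsZ p := by
    rw [← neg_mul]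
    exact mul_le_mul_of_nonneg_right (abs_le.1 hs).1 (stepSymbol_nonneg _ _)
  have hsmeared : (J.card : ℝ)⁻¹ * stepSymbol dirsZ p * (1 / 2) ≤
      walkSymbol J p * smearingSymbol γ s p :=
    mul_le_mul hwalk (smearingSymbol_mem_Icc hsγ p).1 (by norm_num) (hwalk_nonneg.trans hwalk)
  rw [mul_inv] at hdrift ⊢
  rw [ctildeDenom, add_zero]
  linarith

lemma le_ctildeDenom_zero_of_mem_brillouinZone (hJ : dirsZ ⊆ J)
    (hs : |s| ≤ (4 * (J.card : ℝ))⁻¹) (hsγ : |s * γ| ≤ 1 / 16) {p : ℝ × ℝ}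
    (hp : p ∈ brillouinZone) :
    (π ^ 2 * (J.card : ℝ))⁻¹ * (p.1 ^ 2 + p.2 ^ 2) ≤ ctildeDenom J γ s 0 p :=
  calc (π ^ 2 * (J.card : ℝ))⁻¹ * (p.1 ^ 2 + p.2 ^ 2)
      = (4 * (J.card : ℝ))⁻¹ * (4 / π ^ 2 * (p.1 ^ 2 + p.2 ^ 2)) := by field_simp
    _ ≤ (4 * (J.card : ℝ))⁻¹ * stepSymbol dirsZ p := by
        gcongr
        exact le_stepSymbol_dirsZ hp
    _ ≤ ctildeDenom J γ s 0 p := le_ctildeDenom_zero hJ hs hsγ p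

lemma card_pos_of_dirsZ_subset (hJ : dirsZ ⊆ J) : (0 : ℝ) < J.card :=
  Nat.cast_pos.2 ((Finset.card_pos.2 ⟨(1, 0), by decide⟩).trans_le (Finset.card_le_card hJ))

lemma ctildeDenom_zero_pos (hJ : dirsZ ⊆ J) (hs : |s| ≤ (4 * (J.card : ℝ))⁻¹)
    (hsγ : |s * γ| ≤ 1 / 16) {p : ℝ × ℝ} (hp : p ∈ brillouinZone) (hp0 : p ≠ 0) :
    0 < ctildeDenom J γ s 0 p := by
  have hcard := card_pos_of_dirsZ_subset hJ
  have hpos := sq_add_sq_pos hp0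
  exact lt_of_lt_of_le (by positivity) (le_ctildeDenom_zero_of_mem_brillouinZone hJ hs hsγ hp)

lemma ctildeDenom_zero_nonneg (hJ : dirsZ ⊆ J) (hs : |s| ≤ (4 * (J.card : ℝ))⁻¹)
    (hsγ : |s * γ| ≤ 1 / 16) (p : ℝ × ℝ) : 0 ≤ ctildeDenom J γ s 0 p :=
  (mul_nonneg (by positivity) (stepSymbol_nonneg _ _)).trans (le_ctildeDenom_zero hJ hs hsγ p)

lemma ctildeDenom_pos (hJ : dirsZ ⊆ J) (hs : |s| ≤ (4 * (J.card : ℝ))⁻¹)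
    (hsγ : |s * γ| ≤ 1 / 16) {m2 : ℝ} (hm2 : 0 < m2) (p : ℝ × ℝ) :
    0 < ctildeDenom J γ s m2 p := by
  rw [ctildeDenom_eq_add_mass_mul]
  have hQ : 0 < smearingSymbol γ s p :=
    one_half_pos.trans_le (smearingSymbol_mem_Icc hsγ p).1
  exact add_pos_of_nonneg_of_pos (ctildeDenom_zero_nonneg hJ hs hsγ p) (mul_pos hm2 hQ)

lemma vJsq_add_pos (hJ : dirsZ ⊆ J) (hs : |s| ≤ (4 * (J.card : ℝ))⁻¹) : 0 < vJsq J + s := by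
  have hcard := card_pos_of_dirsZ_subset hJ
  have hsum : 2 ≤ ∑ y ∈ J, (y.1 : ℝ) ^ 2 :=
    sum_dirsZ_fst_sq.ge.trans
      (Finset.sum_le_sum_of_subset_of_nonneg hJ fun _ _ _ => sq_nonneg _)
  have hvJsq : (J.card : ℝ)⁻¹ ≤ vJsq J :=
    calc (J.card : ℝ)⁻¹ = (2 * (J.card : ℝ))⁻¹ * 2 := by field_simp
      _ ≤ vJsq J := by unfold vJsq; gcongr
  have hinv : 0 < (J.card : ℝ)⁻¹ := inv_pos.2 hcard
  rw [mul_inv] at hs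
  linarith [(abs_le.1 hs).1]

lemma tendsto_smearingSymbol_smul (γ s : ℝ) (k : ℝ × ℝ) :
    Tendsto (fun ε : ℝ => smearingSymbol γ s (ε • k)) (nhds 0) (nhds 1) := by
  have hcont : Continuous fun ε : ℝ => smearingSymbol γ s (ε • k) := by fun_prop
  simpa [smearingSymbol, stepSymbol_dirsZ] using hcont.tendsto 0

lemma tendsto_ctildeDenom_zero_smul_div_sq (hJ : StepDist J) (γ s : ℝ) (k : ℝ × ℝ) :
    Tendsto (fun ε : ℝ => ctildeDenom J γ s 0 (ε • k) / ε ^ 2) (nhdsWithin 0 {0}ᶜ)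
      (nhds ((vJsq J + s) * (k.1 ^ 2 + k.2 ^ 2))) := by
  have hwalk := (hJ.tendsto_stepSymbol_smul_div_sq k).const_mul (J.card : ℝ)⁻¹
  have hnn := (stepDist_dirsZ.tendsto_stepSymbol_smul_div_sq k).const_mul s
  have hsmear := (tendsto_smearingSymbol_smul γ s k).mono_left
    (nhdsWithin_le_nhds (s := {0}ᶜ))
  rw [sum_dirsZ_fst_sq] at hnn
  convert (hwalk.mul hsmear).add hnn using 2
  · simp only [ctildeDenom, walkSymbol]
    ring
  · rw [vJsq, mul_inv]
    ring

theorem isGreenSymbol_ctildeSymbol (hJ : StepDist J) (hs : |s| ≤ (4 * (J.card : ℝ))⁻¹)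
    (hsγ : |s * γ| ≤ 1 / 16) :
    IsGreenSymbol (ctildeSymbol J γ s 0) (2 * (π ^ 2 * J.card)) (vJsq J + s)⁻¹ where
  measurable := (continuous_smearingSymbol γ s).measurable.div
    (continuous_ctildeDenom J γ s 0).measurable
  nonneg p := div_nonneg (one_half_pos.le.trans (smearingSymbol_mem_Icc hsγ p).1)
    (ctildeDenom_zero_nonneg hJ.dirsZ_subset hs hsγ p)
  le p hp hp0 := by
    have hcard := card_pos_of_dirsZ_subset hJ.dirsZ_subset
    have hpos := sq_add_sq_pos hp0
    calc ctildeSymbol J γ s 0 p ≤ 2 / ((π ^ 2 * (J.card : ℝ))⁻¹ * (p.1 ^ 2 + p.2 ^ 2)) :=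
          div_le_div₀ zero_le_two (smearingSymbol_mem_Icc hsγ p).2 (by positivity)
            (le_ctildeDenom_zero_of_mem_brillouinZone hJ.dirsZ_subset hs hsγ hp)
      _ = 2 * (π ^ 2 * J.card) / (p.1 ^ 2 + p.2 ^ 2) := by field_simp
  continuousAt p hp hp0 := (continuous_smearingSymbol γ s).continuousAt.div
    (continuous_ctildeDenom J γ s 0).continuousAt
    (ctildeDenom_zero_pos hJ.dirsZ_subset hs hsγ hp hp0).ne'
  tendsto k hk := by
    have hpos : 0 < (vJsq J + s) * (k.1 ^ 2 + k.2 ^ 2) :=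
      mul_pos (vJsq_add_pos hJ.dirsZ_subset hs) (sq_add_sq_pos hk)
    have hquot := ((tendsto_smearingSymbol_smul γ s k).mono_left nhdsWithin_le_nhds).div
      (tendsto_ctildeDenom_zero_smul_div_sq hJ γ s k) hpos.ne'
    rw [div_eq_mul_inv, ← mul_inv, ← one_div]
    refine (hquot.mono_left (nhdsGT_le_nhdsNE 0)).congr fun ε => ?_
    rw [ctildeSymbol, Pi.div_apply, div_div_eq_mul_div]
    ring

end CtildeSymbol

section TorusCovariance

variable (n : ℕ) [NeZero n]

lemma torusFourier_lapNN (k : Torus n) (f : Torus n → ℝ) :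
    torusFourier n k (lapNN n f) =
      -(stepSymbol dirsZ (torusMomentum n k) : ℂ) * torusFourier n k f :=
  torusFourier_sum_sub n (fun _ => stepDist_dirsZ.neg_mem) k f

lemma torusFourier_laplacianJ {J : Finset (ℤ × ℤ)} (hJ : ∀ y ∈ J, -y ∈ J) (k : Torus n)
    (f : Torus n → ℝ) :
    torusFourier n k (laplacianJ J n f) =
      -(walkSymbol J (torusMomentum n k) : ℂ) * torusFourier n k f := by
  have hsmul : laplacianJ J n f =
      (J.card : ℝ)⁻¹ • fun x => ∑ y ∈ J, (f (x + torusProj n y) - f x) := rfl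
  rw [hsmul, map_smul, torusFourier_sum_sub n hJ, Complex.real_smul, walkSymbol]
  push_cast
  ring

lemma torusFourier_add_mul_lapNN (γ s : ℝ) (k : Torus n) (f : Torus n → ℝ) :
    torusFourier n k (fun x => f x + s * γ * lapNN n f x) =
      (smearingSymbol γ s (torusMomentum n k) : ℂ) * torusFourier n k f := by
  have hsmul : (fun x => f x + s * γ * lapNN n f x) = f + (s * γ) • lapNN n f := rfl
  rw [hsmul, map_add, map_smul, torusFourier_lapNN, Complex.real_smul, smearingSymbol]
  push_cast
  ring

lemma ctildeDenom_mul_torusFourier {J : Finset (ℤ × ℤ)} (hJ : ∀ y ∈ J, -y ∈ J) {γ s m2 : ℝ}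
    {g u : Torus n → ℝ}
    (hu : ∀ x, -(laplacianJ J n
          (fun y => u y + γ * (g y + s * γ * lapNN n g y + s * lapNN n u y)) x)
        + m2 * (u x + γ * (g x + s * γ * lapNN n g x + s * lapNN n u x))
        = g x + s * γ * lapNN n g x + s * lapNN n u x) (k : Torus n) :
    (ctildeDenom J γ s m2 (torusMomentum n k) : ℂ) * torusFourier n k u =
      (1 - γ * (walkSymbol J (torusMomentum n k) + m2)) *
        (smearingSymbol γ s (torusMomentum n k) * torusFourier n k g) := by
  let h : Torus n → ℝ := fun x => g x + s * γ * lapNN n g x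
  let w : Torus n → ℝ := h + s • lapNN n u
  have hequation : -laplacianJ J n (u + γ • w) + m2 • (u + γ • w) = w := funext hu
  have hw : torusFourier n k w = smearingSymbol γ s (torusMomentum n k) * torusFourier n k g -
      s * stepSymbol dirsZ (torusMomentum n k) * torusFourier n k u := by
    rw [map_add, map_smul, torusFourier_add_mul_lapNN, torusFourier_lapNN, Complex.real_smul]
    ring
  have hfourier := congrArg (torusFourier n k) hequation
  simp only [map_add, map_neg, map_smul, torusFourier_laplacianJ n hJ, Complex.real_smul, hw]
    at hfourier
  rw [ctildeDenom]
  simp only [smearingSymbol] at hfourier ⊢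
  push_cast at hfourier ⊢
  linear_combination hfourier

theorem IsCtildeVal.eq_torusForm {J : Finset (ℤ × ℤ)} (hJ : ∀ y ∈ J, -y ∈ J) {γ s m2 val : ℝ}
    {g : ℤ × ℤ → ℝ} (hg : (Function.support g).Finite)
    (hdenom : ∀ k, ctildeDenom J γ s m2 (torusMomentum n k) ≠ 0)
    (hval : IsCtildeVal J n γ s m2 (toTorus n g) val) :
    val = torusForm n (ctildeSymbol J γ s m2) g := by
  obtain ⟨u, hu, rfl⟩ := hval
  rw [tsum_fintype, tsum_fintype, ← Complex.ofReal_inj, Complex.ofReal_add, Complex.ofReal_mul,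
    sum_mul_eq_sum_conj_torusFourier_mul, sum_mul_eq_sum_conj_torusFourier_mul, mul_left_comm,
    ← mul_add, Finset.mul_sum, ← Finset.sum_add_distrib, torusForm]
  push_cast
  refine congrArg _ (Finset.sum_congr rfl fun k _ => ?_)
  have hdenom_ne : (ctildeDenom J γ s m2 (torusMomentum n k) : ℂ) ≠ 0 :=
    Complex.ofReal_ne_zero.2 (hdenom k)
  have hsolution := ctildeDenom_mul_torusFourier n hJ hu k
  rw [torusFourier_add_mul_lapNN, torusFourier_add_mul_lapNN, ← torusFourier_toTorus n k hg,
    Complex.normSq_eq_conj_mul_self, mul_left_comm, ← mul_add, mul_assoc, ctildeSymbol]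
  refine congrArg _ ?_
  push_cast
  rw [mul_div_assoc', eq_div_iff hdenom_ne]
  have hcancel : (γ * ctildeDenom J γ s m2 (torusMomentum n k) +
      (1 - γ * (walkSymbol J (torusMomentum n k) + m2)) *
        smearingSymbol γ s (torusMomentum n k) : ℂ) = 1 := by
    exact_mod_cast mul_ctildeDenom_add_eq_one J γ s m2 (torusMomentum n k)
  linear_combination (smearingSymbol γ s (torusMomentum n k) : ℂ) * hsolution +
    smearingSymbol γ s (torusMomentum n k) * torusFourier n k (toTorus n g) * hcancel

theorem tendsto_torusForm_ctildeSymbol {J : Finset (ℤ × ℤ)} (hJ : dirsZ ⊆ J) {γ s : ℝ}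
    (hs : |s| ≤ (4 * (J.card : ℝ))⁻¹) (hsγ : |s * γ| ≤ 1 / 16) {g : ℤ × ℤ → ℝ}
    (hzero : ∑' x, g x = 0) :
    Tendsto (fun m2 => torusForm n (ctildeSymbol J γ s m2) g) (nhds 0)
      (nhds (torusForm n (ctildeSymbol J γ s 0) g)) := by
  refine Tendsto.const_mul _ (tendsto_finsetSum _ fun k _ => ?_)
  rcases eq_or_ne (torusMomentum n k) 0 with hk | hk
  · simp only [hk, latticeFourier_zero hzero, map_zero, zero_mul, tendsto_const_nhds]
  · have hpos := ctildeDenom_zero_pos hJ hs hsγ (torusMomentum_mem_brillouinZone n k) hk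
    have hdenom : Continuous fun m2 => ctildeDenom J γ s m2 (torusMomentum n k) := by
      unfold ctildeDenom
      fun_prop
    exact (tendsto_const_nhds.div (hdenom.tendsto 0) hpos.ne').const_mul _

end TorusCovariance

lemma abs_mul_le_of_abs_le_inv_card {J : Finset (ℤ × ℤ)} (hJ : dirsZ ⊆ J) {γ s : ℝ}
    (hγ : |γ| ≤ 1) (hs : |s| ≤ (4 * (J.card : ℝ))⁻¹) : |s * γ| ≤ 1 / 16 := by
  have hcard : (4 : ℝ) ≤ J.card := by exact_mod_cast card_dirsZ ▸ Finset.card_le_card hJ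
  calc |s * γ| ≤ (4 * (J.card : ℝ))⁻¹ * 1 := by rw [abs_mul]; gcongr
    _ ≤ (4 * 4)⁻¹ * 1 := by gcongr
    _ = 1 / 16 := by norm_num

theorem ctilde_iterated_scaling_limit_general {J : Finset (ℤ × ℤ)} (hJ : StepDist J) {γ s : ℝ}
    (hs : |s| ≤ (4 * (J.card : ℝ))⁻¹) (hsγ : |s * γ| ≤ 1 / 16) {side : ℕ → ℕ}
    [∀ N, NeZero (side N)] (hside : Tendsto side atTop atTop) {f : ℝ × ℝ → ℝ} (hf : Continuous f)
    {fε : ℝ → (ℤ × ℤ) → ℝ} {Cf : ℝ} (hA : IsAdmissible f fε Cf) {V : ℝ → ℕ → ℝ → ℝ}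
    (hV : ∀ ε ∈ Set.Ioo (0 : ℝ) 1, ∀ N : ℕ, ∀ m2 > (0 : ℝ),
      IsCtildeVal J (side N) γ s m2 (toTorus (side N) (fε ε)) (V ε N m2)) :
    ∃ (S₁ : ℝ → ℕ → ℝ) (S₂ : ℝ → ℝ),
      (∀ ε ∈ Set.Ioo (0 : ℝ) 1, ∀ N : ℕ,
        Tendsto (V ε N) (nhdsWithin 0 (Set.Ioi 0)) (nhds (S₁ ε N))) ∧
      (∀ ε ∈ Set.Ioo (0 : ℝ) 1, Tendsto (S₁ ε) atTop (nhds (S₂ ε))) ∧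
      Tendsto S₂ (nhdsWithin 0 (Set.Ioi 0)) (nhds ((vJsq J + s)⁻¹ * gffPairing f)) := by
  have hgreen := isGreenSymbol_ctildeSymbol hJ hs hsγ
  refine ⟨fun ε N => torusForm (side N) (ctildeSymbol J γ s 0) (fε ε),
    fun ε => latticeForm (ctildeSymbol J γ s 0) (fε ε), fun ε hε N => ?_,
    fun ε hε => tendsto_torusForm hgreen (hA.finite_supp ε hε) (hA.sum_zero ε hε) hside,
    hA.tendsto_latticeForm hf hgreen⟩
  refine ((tendsto_torusForm_ctildeSymbol (side N) hJ.dirsZ_subset hs hsγ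
    (hA.sum_zero ε hε)).mono_left nhdsWithin_le_nhds).congr' ?_
  filter_upwards [self_mem_nhdsWithin] with m2 hm2
  exact ((hV ε hε N m2 hm2).eq_torusForm (side N) (fun _ => hJ.neg_mem) (hA.finite_supp ε hε)
    fun k => (ctildeDenom_pos hJ.dirsZ_subset hs hsγ hm2 _).ne').symm

/-- **Lemma 2.5** (mesoscopic/infinite-volume limit of the deformed covariance):
`lim_{ε→0} lim_{N→∞} lim_{m²↓0} (f_ε, C̃^{Λ_N}(s,m²) f_ε)
  = (v_J² + s)⁻¹ (f, (−Δ_{ℝ²})⁻¹ f)`. -/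
theorem ctilde_iterated_scaling_limit
    (L : ℕ) (hL : 1 < L) (J : Finset (ℤ × ℤ)) (hJ : StepDist J)
    (γ : ℝ) (hγ : γ ∈ Set.Ioo (0 : ℝ) (1 / 3)) :
    ∃ s₀ > (0 : ℝ), ∀ s : ℝ, |s| ≤ s₀ →
      ∀ f : ℝ × ℝ → ℝ, ContDiff ℝ (⊤ : ℕ∞) f → HasCompactSupport f →
        (∫ x : ℝ × ℝ, f x) = 0 →
        ∀ (fε : ℝ → (ℤ × ℤ) → ℝ) (Cf : ℝ), IsAdmissible f fε Cf →
          ∀ V : ℝ → ℕ → ℝ → ℝ,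
            (∀ ε ∈ Set.Ioo (0 : ℝ) 1, ∀ N : ℕ, ∀ m2 > (0 : ℝ),
              IsCtildeVal J (L ^ N) γ s m2 (toTorus (L ^ N) (fε ε)) (V ε N m2)) →
            ∃ (S₁ : ℝ → ℕ → ℝ) (S₂ : ℝ → ℝ),
              (∀ ε ∈ Set.Ioo (0 : ℝ) 1, ∀ N : ℕ,
                Tendsto (V ε N) (nhdsWithin 0 (Set.Ioi 0)) (nhds (S₁ ε N))) ∧
              (∀ ε ∈ Set.Ioo (0 : ℝ) 1, Tendsto (S₁ ε) atTop (nhds (S₂ ε))) ∧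
              Tendsto S₂ (nhdsWithin 0 (Set.Ioi 0))
                (nhds ((vJsq J + s)⁻¹ * gffPairing f)) := by
  have hcard := card_pos_of_dirsZ_subset hJ.dirsZ_subset
  have : NeZero L := ⟨by omega⟩
  have hγ1 : |γ| ≤ 1 := abs_le.2 ⟨by linarith [hγ.1], by linarith [hγ.2]⟩
  exact ⟨(4 * (J.card : ℝ))⁻¹, by positivity, fun s hs f hf _ _ fε Cf hA V hV =>
    ctilde_iterated_scaling_limit_general hJ hs
      (abs_mul_le_of_abs_le_inv_card hJ.dirsZ_subset hγ1 hs)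
      (tendsto_pow_atTop_atTop_of_one_lt hL) hf.continuous hA hV⟩

end
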